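/- For every δ > 0 there exists a constant C(δ) > 0 such that for every intensity α ∈ (0,1/2] and all integers 1 ≤ r < R with ⌊(1+δ)r⌋ > r: (i) with probability at least C(δ), no loop frontier of the frontier loop soup 𝓛^b_R crosses A_{r,⌊(1+δ)r⌋}; and (ii) with probability at least C(δ), no loop of 𝓛_R crosses A_{r,⌊(1+δ)r⌋} without disconnecting B_r from ∂B_{⌊(1+δ)r⌋}. -/

import Mathlib

open MeasureTheory Set
open scoped ENNReal NNReal

noncomputable section

namespace RWLSPaper

open scoped Classical

/-- Vertices of the square lattice `ℤ²`. -/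
abbrev Lat : Type := ℤ × ℤ

/-- The plane `ℝ²`, with the Euclidean metric. -/
abbrev Plane : Type := EuclideanSpace ℝ (Fin 2)

/-- Embedding of the lattice into the plane. -/
def emb (z : Lat) : Plane := (WithLp.equiv 2 (Fin 2 → ℝ)).symm ![(z.1 : ℝ), (z.2 : ℝ)]

/-- Lattice adjacency: Euclidean distance one. -/
def Adj (a b : Lat) : Prop := (a.1 - b.1) ^ 2 + (a.2 - b.2) ^ 2 = 1

/-- ℓ∞ norm on the lattice. -/
def linf (a : Lat) : ℤ := max |a.1| |a.2|

/-- The box `B_R(z) = {w : |w - z|_∞ ≤ R}`. -/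
def box (z : Lat) (R : ℤ) : Set Lat := {w | linf (w - z) ≤ R}

/-- Inner vertex boundary of a set of vertices. -/
def bdry (A : Set Lat) : Set Lat := {z | z ∈ A ∧ ∃ w, w ∉ A ∧ linf (z - w) = 1}

/-- A set of vertices, embedded in the plane. -/
def embS (A : Set Lat) : Set Plane := emb '' A

/-- The boundary of the box `B_R(z)`, embedded in the plane. -/
def bdryE (z : Lat) (R : ℤ) : Set Plane := embS (bdry (box z R))

/-- The solid box `z + [-R,R]²` in the plane. -/
def boxP (z : Lat) (R : ℤ) : Set Plane :=
  {p | |p 0 - (z.1 : ℝ)| ≤ (R : ℝ) ∧ |p 1 - (z.2 : ℝ)| ≤ (R : ℝ)}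

/-- Trace of a list of vertices: the vertices, together with the segments joining
consecutive ones. -/
def traceL (l : List Lat) : Set Plane :=
  (⋃ z ∈ l, {emb z}) ∪ ⋃ p ∈ l.zip l.tail, segment ℝ (emb p.1) (emb p.2)

/-- Nearest-neighbour paths: nonempty lists of successively adjacent vertices. -/
def IsPath (l : List Lat) : Prop := l ≠ [] ∧ l.Chain' Adj

/-- Number of steps of a path. -/
def steps (l : List Lat) : ℕ := l.length - 1

/-- Paths from `z` to `w` with at least one step. -/
def PathsBetween (z w : Lat) : Set (List Lat) :=
  {l | IsPath l ∧ l.head? = some z ∧ l.getLast? = some w ∧ 2 ≤ l.length}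

/-- Total mass of a set of paths under the measure giving weight `4^{-|η|}` to each
path `η`. -/
def pathMass (M : Set (List Lat)) : ℝ≥0∞ :=
  ∑' l : M, (4 : ℝ≥0∞)⁻¹ ^ steps l.1

/-- `A` disconnects `B` from `C` in the plane: every continuous path joining a point
of `B` to a point of `C` meets `A`. -/
def Disconnects (A B C : Set Plane) : Prop :=
  ∀ γ : ℝ → Plane, ContinuousOn γ (Icc 0 1) → γ 0 ∈ B → γ 1 ∈ C →
    ∃ t ∈ Icc (0 : ℝ) 1, γ t ∈ A

/-- The set `M^{z,w}_{r,R}` of paths from `z` to `w` which intersect `∂B_R` and do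
not disconnect `B_r` from `∂B_R`. -/
def MSet (z w : Lat) (r R : ℤ) : Set (List Lat) :=
  {l | l ∈ PathsBetween z w ∧ (traceL l ∩ bdryE 0 R).Nonempty ∧
    ¬ Disconnects (traceL l) (embS (box 0 r)) (bdryE 0 R)}

/-- Nearest-neighbour walks from `u` to `v` staying in `D`. -/
def WalksIn (D : Set Lat) (u v : Lat) : Set (List Lat) :=
  {l | IsPath l ∧ l.head? = some u ∧ l.getLast? = some v ∧ ∀ x ∈ l, x ∈ D}

/-- The Green's function of simple random walk killed upon exiting `D`, through the
path-sum formula `G_D(u,v) = Σ_{η : u → v, η ⊆ D} 4^{-|η|}`. -/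
def green (D : Set Lat) (u v : Lat) : ℝ≥0∞ :=
  ∑' l : WalksIn D u v, (4 : ℝ≥0∞)⁻¹ ^ steps l.1

/-! ### Loops -/

/-- A rooted loop, encoded by its cyclic word: a nonempty list of vertices which,
cyclically, are successively adjacent. -/
structure RootedLoop where
  word : List Lat
  ne : word ≠ []
  adj : (word ++ word.take 1).Chain' Adj

/-- Rerooting (cyclic relabeling) relation on rooted loops. -/
def loopRot (l l' : RootedLoop) : Prop := ∃ k, l'.word = l.word.rotate k

/-- Unrooted loops: rooted loops modulo rerooting. -/
def ULoop : Type := Quot loopRot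

/-- A representative of an unrooted loop. -/
def ULoop.out (γ : ULoop) : RootedLoop := Quot.out γ

/-- Number of steps of a loop. -/
def ULoop.steps (γ : ULoop) : ℕ := γ.out.word.length

/-- Vertices visited by a loop. -/
def ULoop.verts (γ : ULoop) : Set Lat := {x | x ∈ γ.out.word}

/-- The trace of a loop in the plane. -/
def ULoop.trace (γ : ULoop) : Set Plane := traceL (γ.out.word ++ γ.out.word.take 1)

/-- The multiplicity `J(γ)`: the largest `j` such that `γ` is the concatenation of
`j` copies of a single loop. -/
def ULoop.mult (γ : ULoop) : ℕ :=
  sSup {j : ℕ | ∃ u : List Lat, u ≠ [] ∧ γ.out.word = (List.replicate j u).flatten}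

/-- The unrooted loop measure: `ν(γ) = 4^{-|γ|} / J(γ)`. -/
def loopWeight (γ : ULoop) : ℝ≥0 := (4 : ℝ≥0)⁻¹ ^ γ.steps / (γ.mult : ℝ≥0)

/-- Total `ν`-mass of a set of loops. -/
def nuMass (S : Set ULoop) : ℝ≥0∞ := ∑' γ : S, (loopWeight γ.1 : ℝ≥0∞)

/-- `ν(γ)` if `γ` is contained in `D`, and `0` otherwise. -/
def nuD (D : Set Lat) (γ : ULoop) : ℝ≥0 := if ULoop.verts γ ⊆ D then loopWeight γ else 0

/-! ### The random walk loop soup -/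

/-- Loop configurations: multiplicity functions on unrooted loops. -/
abbrev Config : Type := ULoop → ℕ

/-- The set of loops appearing in a configuration. -/
def Config.loops (ω : Config) : Set ULoop := {γ | ω γ ≠ 0}

/-- The Poisson probability mass function with mean `r`. -/
def poissonProb (r : ℝ≥0) (k : ℕ) : ℝ≥0∞ :=
  ENNReal.ofReal (Real.exp (-(r : ℝ)) * (r : ℝ) ^ k / k.factorial)

/-- `P` is the law of the random walk loop soup in `D` with intensity `α`: a Poisson
point process with intensity `α·ν` restricted to loops contained in `D`; equivalently,
the multiplicities of the various loops are independent, the multiplicity of a loop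
`γ ⊆ D` being Poisson-distributed with mean `α ν(γ)`. -/
def IsLoopSoup (D : Set Lat) (α : ℝ) (P : Measure Config) : Prop :=
  IsProbabilityMeasure P ∧
  ∀ (s : Finset ULoop) (m : ULoop → ℕ),
    P {ω | ∀ γ ∈ s, ω γ = m γ} = ∏ γ ∈ s, poissonProb (α.toNNReal * nuD D γ) (m γ)

/-- Decreasing events of the loop soup. -/
def DecreasingEvent (E : Set Config) : Prop :=
  ∀ ω ω' : Config, (∀ γ, ω' γ ≤ ω γ) → ω ∈ E → ω' ∈ E

/-! ### Clusters -/

/-- Two loops are adjacent when they intersect. -/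
def Touches (γ γ' : ULoop) : Prop := (ULoop.verts γ ∩ ULoop.verts γ').Nonempty

/-- Connection of loops within a family `L` of loops: transitive closure of adjacency. -/
def linkedL (L : Set ULoop) : ULoop → ULoop → Prop :=
  Relation.ReflTransGen (fun a b => a ∈ L ∧ b ∈ L ∧ Touches a b)

/-- The cluster of `γ` in `L`, as a set of loops. -/
def clusterClass (L : Set ULoop) (γ : ULoop) : Set ULoop := {γ' | γ' ∈ L ∧ linkedL L γ γ'}

/-- The subset of the plane covered by a family of loops. -/
def classTrace (K : Set ULoop) : Set Plane := ⋃ γ ∈ K, ULoop.trace γ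

/-- The clusters of a loop configuration, regarded as subsets of the plane. -/
def clusters (L : Set ULoop) : Set (Set Plane) :=
  {C | ∃ γ ∈ L, C = classTrace (clusterClass L γ)}

/-- `Λ(A, L)`: the union of `A` with all the clusters of `L` meeting `A`. -/
def LamL (A : Set Plane) (L : Set ULoop) : Set Plane :=
  A ∪ ⋃ C ∈ {C | C ∈ clusters L ∧ (C ∩ A).Nonempty}, C

/-- Connection within an arbitrary family of subsets of the plane (two members being
adjacent when they intersect). -/
def linkedS (F : Set (Set Plane)) : Set Plane → Set Plane → Prop :=
  Relation.ReflTransGen (fun a b => a ∈ F ∧ b ∈ F ∧ (a ∩ b).Nonempty)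

/-- Clusters of a family of subsets of the plane. -/
def clustersS (F : Set (Set Plane)) : Set (Set Plane) :=
  {C | ∃ S ∈ F, C = ⋃ S' ∈ {S' | S' ∈ F ∧ linkedS F S S'}, S'}

/-- `Λ(A, F)` for a family `F` of subsets of the plane. -/
def LamS (A : Set Plane) (F : Set (Set Plane)) : Set Plane :=
  A ∪ ⋃ C ∈ {C | C ∈ clustersS F ∧ (C ∩ A).Nonempty}, C

/-- The traces of a family of loops. -/
def traces (L : Set ULoop) : Set (Set Plane) := ULoop.trace '' L

/-! ### Filling, frontier, outermost clusters, crossings -/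

/-- The filling of a set: the complement of the union of all unbounded connected
subsets of the complement of its closure. -/
def Fill (A : Set Plane) : Set Plane :=
  {x | ∀ C : Set Plane, C ⊆ (closure A)ᶜ → IsConnected C → x ∈ C → Bornology.IsBounded C}

/-- The frontier of a loop: the topological boundary of the filling of its trace. -/
def loopFrontier (γ : ULoop) : Set Plane := frontier (Fill (ULoop.trace γ))

/-- The frontiers of the loops of a family. -/
def frontiers (L : Set ULoop) : Set (Set Plane) := loopFrontier '' L

/-- An outermost cluster of `L`. -/
def Outermost (L : Set ULoop) (C : Set Plane) : Prop :=
  C ∈ clusters L ∧ ∀ C' ∈ clusters L, C' ≠ C → ¬ Fill C ⊆ Fill C'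

/-- `S` crosses the annulus `A_{r,R}(z)`: it meets both `∂B_r(z)` and `∂B_R(z)`. -/
def CrossesAnn (S : Set Plane) (z : Lat) (r R : ℤ) : Prop :=
  (S ∩ bdryE z r).Nonempty ∧ (S ∩ bdryE z R).Nonempty

/-! ### Arm events -/

/-- The four-arm event: at least two distinct outermost clusters cross `A_{l,d}(z)`. -/
def fourArm (z : Lat) (l d : ℤ) (L : Set ULoop) : Prop :=
  ∃ C1 C2 : Set Plane, Outermost L C1 ∧ Outermost L C2 ∧ C1 ≠ C2 ∧
    CrossesAnn C1 z l d ∧ CrossesAnn C2 z l d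

/-- The four-arm event, as a set of configurations. -/
def A4 (z : Lat) (l d : ℤ) : Set Config := {ω | fourArm z l d ω.loops}

/-- The truncated four-arm event `→𝒜(z;l,d)`. -/
def A4trunc (z : Lat) (l d : ℤ) : Set Config :=
  {ω | fourArm z l d ω.loops ∧ LamL (embS (box z l)) ω.loops ⊆ boxP z (2 * d)}

/-- The truncated inward four-arm event `←𝒜(z;l,d)`. -/
def A4in (z : Lat) (l d : ℤ) : Set Config :=
  {ω | fourArm z l d ω.loops ∧
    LamL (embS (bdry (box z d))) ω.loops ∩ embS (box z (l / 2)) = ∅}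

/-- Lattice points in the open upper half-plane `ℍ`. -/
def upperLat : Set Lat := {w | 0 < w.2}

/-- The upper part of the boundary of `B_R`, embedded in the plane. -/
def bdryEP (R : ℤ) : Set Plane := embS (bdry (box 0 R) ∩ upperLat)

/-- `S` crosses the half-annulus `A^+_{r,R}`. -/
def CrossesAnnP (S : Set Plane) (r R : ℤ) : Prop :=
  (S ∩ bdryEP r).Nonempty ∧ (S ∩ bdryEP R).Nonempty

/-- The interior two-arm event: some outermost cluster has a frontier crossing `A_{l,d}`. -/
def A2 (l d : ℤ) : Set Config :=
  {ω | ∃ C, Outermost ω.loops C ∧ CrossesAnn (frontier (Fill C)) 0 l d}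

/-- The boundary two-arm event. -/
def A2P (l d : ℤ) : Set Config :=
  {ω | ∃ C, Outermost ω.loops C ∧ CrossesAnnP (frontier (Fill C)) l d}

/-- The boundary four-arm event. -/
def A4P (l d : ℤ) : Set Config :=
  {ω | ∃ C1 C2, Outermost ω.loops C1 ∧ Outermost ω.loops C2 ∧ C1 ≠ C2 ∧
    CrossesAnnP C1 l d ∧ CrossesAnnP C2 l d}

/-- Outward truncation condition: `Λ(B_l, ·) ⊆ B_{2d}`. -/
def TruncOut (l d : ℤ) (ω : Config) : Prop :=
  LamL (embS (box 0 l)) ω.loops ⊆ boxP 0 (2 * d)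

/-- Inward truncation condition: `Λ(∂B_d, ·) ∩ B_{⌊l/2⌋} = ∅`. -/
def TruncIn (l d : ℤ) (ω : Config) : Prop :=
  LamL (embS (bdry (box 0 d))) ω.loops ∩ embS (box 0 (l / 2)) = ∅

/-! ### Random walks and qualities -/

/-- `μ` is the law of the simple random walk on `ℤ²` started at `z`, as a measure on
`ℕ → ℤ²`. -/
def IsSRW (z : Lat) (μ : Measure (ℕ → Lat)) : Prop :=
  IsProbabilityMeasure μ ∧
  ∀ (n : ℕ) (f : ℕ → Lat), f 0 = z → (∀ i < n, Adj (f i) (f (i + 1))) →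
    μ {w | ∀ i ≤ n, w i = f i} = (4 : ℝ≥0∞)⁻¹ ^ n

/-- First hitting time of a set of vertices by a walk. -/
def hitTime (w : ℕ → Lat) (A : Set Lat) : ℕ := sInf {i | w i ∈ A}

/-- Position of a walk at its first hitting of `A`. -/
def hitPt (w : ℕ → Lat) (A : Set Lat) : Lat := w (hitTime w A)

/-- Trace of a walk, stopped at its first hitting of `A`. -/
def stoppedTrace (w : ℕ → Lat) (A : Set Lat) : Set Plane :=
  traceL ((List.range (hitTime w A + 1)).map w)

/-- The walk stays in `D` up to its first hitting of `A`. -/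
def StaysIn (w : ℕ → Lat) (D A : Set Lat) : Prop := ∀ i ≤ hitTime w A, w i ∈ D

/-- `μ` is the law of the simple random walk started at `z`, conditioned to stay in
`D` until it first hits `A`. -/
def IsCondSRW (z : Lat) (D A : Set Lat) (μ : Measure (ℕ → Lat)) : Prop :=
  ∃ ν : Measure (ℕ → Lat), IsSRW z ν ∧
    μ = (ν {w | StaysIn w D A})⁻¹ • ν.restrict {w | StaysIn w D A}

/-- Lattice ball of real radius (ℓ∞ distance). -/
def ballV (c : Lat) (ρ : ℝ) : Set Lat := {w | ((linf (w - c) : ℤ) : ℝ) ≤ ρ}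

/-- Union of the stopped traces of a packet of walks. -/
def packTrace {j : ℕ} (ws : Fin j → ℕ → Lat) (A : Set Lat) : Set Plane :=
  ⋃ i, stoppedTrace (ws i) A

/-- Union of the balls of radius `ρ` around the hitting points of a packet of walks. -/
def packBalls {j : ℕ} (ws : Fin j → ℕ → Lat) (A : Set Lat) (ρ : ℝ) : Set Plane :=
  ⋃ i, embS (ballV (hitPt (ws i) A) ρ)

/-- The frontiers of the loops of `ω` not contained in `B_r`. -/
def outerFrontiers (r : ℤ) (ω : Config) : Set (Set Plane) :=
  frontiers {γ | γ ∈ ω.loops ∧ ¬ ULoop.verts γ ⊆ box 0 r}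

/-- The frontiers of the loops of `ω` meeting `B_R`. -/
def meetFrontiers (R : ℤ) (ω : Config) : Set (Set Plane) :=
  frontiers {γ | γ ∈ ω.loops ∧ (ULoop.verts γ ∩ box 0 R).Nonempty}

/-- Quality at scale `s` for two packets of walks inside a loop soup, with initial
configuration `(Lr, V1, V2)` at scale `r`. -/
def qualityJK (Lr : Set ULoop) (V1 V2 : Set Lat) (r : ℤ) {j k : ℕ}
    (w1 : Fin j → ℕ → Lat) (w2 : Fin k → ℕ → Lat) (ω : Config) (s : ℤ) : ℝ :=
  sSup {δ : ℝ | 0 ≤ δ ∧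
    LamS (embS V1 ∪ packTrace w1 (bdry (box 0 s)) ∪ packBalls w1 (bdry (box 0 s)) (δ * (s : ℝ)))
        (traces Lr ∪ outerFrontiers r ω) ∩
      (embS V2 ∪ packTrace w2 (bdry (box 0 s)) ∪
        packBalls w2 (bdry (box 0 s)) (δ * (s : ℝ))) = ∅}

/-- Quality at scale `s` for a single pair of walks. -/
def qualityPair (Lr : Set ULoop) (V1 V2 : Set Lat) (r : ℤ)
    (w1 w2 : ℕ → Lat) (ω : Config) (s : ℤ) : ℝ :=
  qualityJK Lr V1 V2 r (fun _ : Fin 1 => w1) (fun _ : Fin 1 => w2) ω s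

/-- Reversed quality at scale `s`, for two packets walking inward from `∂B_R`. -/
def qualityRev (L : Set ULoop) (V1 V2 : Set Lat) (R : ℤ) {j k : ℕ}
    (w1 : Fin j → ℕ → Lat) (w2 : Fin k → ℕ → Lat) (ω : Config) (s : ℤ) : ℝ :=
  sSup {δ : ℝ | 0 ≤ δ ∧
    LamS (embS V1 ∪ packTrace w1 (bdry (box 0 s)) ∪ packBalls w1 (bdry (box 0 s)) (δ * (s : ℝ)))
        (traces L ∪ meetFrontiers R ω) ∩
      (embS V2 ∪ packTrace w2 (bdry (box 0 s)) ∪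
        packBalls w2 (bdry (box 0 s)) (δ * (s : ℝ))) = ∅}

/-- Quality at scale `s` for one packet of walks, with non-disconnection of `U`. -/
def qualityDisc (Lr : Set ULoop) (U : Set Lat) (r : ℤ) {j : ℕ}
    (ws : Fin j → ℕ → Lat) (ω : Config) (s : ℤ) : ℝ :=
  sSup {δ : ℝ | 0 ≤ δ ∧
    embS U ∩ Fill (LamS
      (packTrace ws (bdry (box 0 s)) ∪ packBalls ws (bdry (box 0 s)) (δ * (s : ℝ)))
      (traces Lr ∪ outerFrontiers r ω)) = ∅}

/-! ### Crossing loops and bad clusters -/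

/-- Crossing loops: loops contained in `D` which cross `A_{d,k}` without
disconnecting `B_d` from `∂B_k`. -/
def crossingLoops (D : Set Lat) (d k : ℤ) : Set ULoop :=
  {γ | ULoop.verts γ ⊆ D ∧ CrossesAnn (ULoop.trace γ) 0 d k ∧
    ¬ Disconnects (ULoop.trace γ) (embS (box 0 d)) (bdryE 0 k)}

/-- `K` is a bad cluster of `L` for the annulus `A_{l,d}`, relative to the set `CL` of
crossing loops: an outermost cluster crossing `A_{l,d}` which no longer crosses it
once its crossing loops are removed. -/
def IsBad (CL : Set ULoop) (l d : ℤ) (L : Set ULoop) (K : Set ULoop) : Prop :=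
  (∃ γ ∈ L, K = clusterClass L γ) ∧
  Outermost L (classTrace K) ∧ CrossesAnn (classTrace K) 0 l d ∧
  ¬ CrossesAnn (classTrace (K \ CL)) 0 l d

/-- `E_1`: the four-arm event holds, with exactly one bad cluster. -/
def E1 (CL : Set ULoop) (l d : ℤ) : Set Config :=
  {ω | fourArm 0 l d ω.loops ∧ ∃! K : Set ULoop, IsBad CL l d ω.loops K}

/-- `E_2`: the four-arm event holds, with at least two bad clusters. -/
def E2 (CL : Set ULoop) (l d : ℤ) : Set Config :=
  {ω | fourArm 0 l d ω.loops ∧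
    ∃ K K' : Set ULoop, K ≠ K' ∧ IsBad CL l d ω.loops K ∧ IsBad CL l d ω.loops K'}

/-- Number of crossing loops of a configuration, counted with multiplicity. -/
def crossingCount (CL : Set ULoop) (ω : Config) : ℝ≥0∞ := ∑' γ : CL, (ω γ.1 : ℝ≥0∞)

/-! ### Arcs of the square -/

/-- The square curve `{‖p‖_∞ = n}`: the closed polygonal curve through `∂B_n`. -/
def sqCurve (n : ℤ) : Set Plane := {p | max |p 0| |p 1| = (n : ℝ)}

/-- `J` is one of the two arcs of the closed curve `∂B_n` with endpoints `x` and `y`. -/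
def IsArc (n : ℤ) (x y : Lat) (J : Set Plane) : Prop :=
  IsClosed J ∧ IsConnected J ∧ J ⊆ sqCurve n ∧ emb x ∈ J ∧ emb y ∈ J ∧
  IsConnected ((sqCurve n \ J) ∪ {emb x, emb y})

/-!
Walks are words in four letters, and the weight `4^{-length}` makes every prefix-free set of words
have mass at most `1`. Writing `s = ⌊(1 + δ) r⌋`, a walk started on `∂B_s` has mass at least some
`p(δ) > 0` of surrounding `B_r` inside `A_{r,s}` before touching `∂B_r`: a walk leaves a square
through a prescribed half of a side with mass at least `1/8`, and boundedly many such exits, chained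
in four bands of width about `(s - r) / 4`, close a circuit.

A loop meeting `∂B_r` and `∂B_s` and containing no such circuit, rerooted on `∂B_s`, is a chain of
excursions from `∂B_s` to `∂B_r` and back, each of which costs a factor `1 - p(δ)`. Its final
return to a prescribed point of `∂B_s` has mass at most `2 / (s - r)`, by the Poisson kernel of the
half-plane, and `∂B_s` has `8 s` points, so the `ν`-mass of these loops is bounded by some `M(δ)`.
The soup contains none of them with probability at least `exp (-α M(δ))`.

A loop containing a circuit disconnects `B_r` from `∂B_s`, hence its frontier does not reach
`∂B_r`. Indeed a path from `B_r` first reaches `∂B_s` on one of the four sides. If it avoids the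
part of the loop that runs along this side, it sees it, prolonged to infinity by two half-lines,
under an angle that varies continuously, is always an odd multiple of `π`, and changes sign.
-/

/-! ### Words -/

section Words

variable {σ : Type*}

/-- The family `M` of words is prefix-free: none of its members is a proper prefix of another. For
families of stopped walks this says that the stopping rule is consistent. -/
def PrefixFree (M : Set (List σ)) : Prop :=
  ∀ a ∈ M, ∀ b ∈ M, a <+: b → a = b

/-- The concatenations `a ++ b` with `a ∈ A` and `b ∈ B a`: a walk of `A`, continued by a walk
which may depend on it. -/
def concatSet (A : Set (List σ)) (B : List σ → Set (List σ)) : Set (List σ) :=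
  {m | ∃ a ∈ A, ∃ b ∈ B a, m = a ++ b}

namespace PrefixFree

variable {A : Set (List σ)} {B : List σ → Set (List σ)}

lemma eq_of_append_prefix_append (hA : PrefixFree A) {a b a' b' : List σ} (ha : a ∈ A)
    (ha' : a' ∈ A) (h : a ++ b <+: a' ++ b') : a = a' := by
  rcases List.prefix_or_prefix_of_prefix ((List.prefix_append a b).trans h)
    (List.prefix_append a' b') with h | h
  · exact hA _ ha _ ha' h
  · exact (hA _ ha' _ ha h).symm

lemma concat (hA : PrefixFree A) (hB : ∀ a ∈ A, PrefixFree (B a)) :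
    PrefixFree (concatSet A B) := by
  rintro _ ⟨a, ha, b, hb, rfl⟩ _ ⟨a', ha', b', hb', rfl⟩ h
  obtain rfl := hA.eq_of_append_prefix_append ha ha' h
  rw [List.prefix_append_right_inj] at h
  rw [hB a ha _ hb _ hb' h]

lemma preimage_map {τ : Type*} {M : Set (List τ)} (hM : PrefixFree M) {f : σ → τ}
    (hf : Function.Injective f) : PrefixFree (List.map f ⁻¹' M) := fun _ ha _ hb hab =>
  List.map_injective_iff.2 hf (hM _ ha _ hb (hab.map f))

lemma subset_singleton_nil (hA : PrefixFree A) (h : [] ∈ A) : A ⊆ {[]} := fun _ hm =>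
  (hA _ h _ hm List.nil_prefix).symm

lemma uniquelyDecodable (hA : PrefixFree A) (h : [] ∉ A) :
    InformationTheory.UniquelyDecodable A := by
  intro L
  induction L with
  | nil =>
    rintro (_ | ⟨w, L'⟩) - hL' hL
    · rfl
    · obtain ⟨rfl, -⟩ : w = [] ∧ L'.flatten = [] := by simpa using hL.symm
      exact absurd (hL' [] (by simp)) h
  | cons v L ih =>
    rintro (_ | ⟨w, L'⟩) hL hL' heq
    · obtain ⟨rfl, -⟩ : v = [] ∧ L.flatten = [] := by simpa using heq
      exact absurd (hL [] (by simp)) h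
    · simp only [List.forall_mem_cons, List.flatten_cons] at hL hL' heq
      obtain rfl := hA.eq_of_append_prefix_append hL.1 hL'.1 (by rw [heq])
      rw [ih L' hL.2 hL'.2 (List.append_cancel_left heq)]

end PrefixFree

variable [Fintype σ]

/-- The total mass of a family of words, a word of length `n` having mass `(card σ)⁻ⁿ`. For a
prefix-free family this is the probability that a sequence of independent uniform letters has a
prefix in the family. -/
def wordMass (M : Set (List σ)) : ℝ≥0∞ :=
  ∑' m : M, (Fintype.card σ : ℝ≥0∞)⁻¹ ^ m.1.length

variable {M N : Set (List σ)} {c p : ℝ≥0∞}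

lemma wordMass_mono (h : M ⊆ N) : wordMass M ≤ wordMass N :=
  ENNReal.tsum_mono_subtype (fun m : List σ => (Fintype.card σ : ℝ≥0∞)⁻¹ ^ m.length) h

lemma wordMass_union_le (M N : Set (List σ)) : wordMass (M ∪ N) ≤ wordMass M + wordMass N :=
  ENNReal.tsum_union_le (fun m : List σ => (Fintype.card σ : ℝ≥0∞)⁻¹ ^ m.length) M N

lemma wordMass_union_of_disjoint (h : Disjoint M N) :
    wordMass (M ∪ N) = wordMass M + wordMass N :=
  ENNReal.summable.tsum_union_disjoint
    (f := fun m : List σ => (Fintype.card σ : ℝ≥0∞)⁻¹ ^ m.length) h ENNReal.summable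

lemma wordMass_iUnion_le {ι : Type*} (M : ι → Set (List σ)) :
    wordMass (⋃ i, M i) ≤ ∑' i, wordMass (M i) :=
  ENNReal.tsum_iUnion_le_tsum (fun m : List σ => (Fintype.card σ : ℝ≥0∞)⁻¹ ^ m.length) M

@[simp] lemma wordMass_empty : wordMass (∅ : Set (List σ)) = 0 := by simp [wordMass]

@[simp] lemma wordMass_singleton_nil : wordMass {([] : List σ)} = 1 := by
  simp [wordMass]

lemma wordMass_le_of_forall_finset
    (h : ∀ S : Finset (List σ), ↑S ⊆ M → ∑ m ∈ S, (Fintype.card σ : ℝ≥0∞)⁻¹ ^ m.length ≤ c) :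
    wordMass M ≤ c := by
  rw [wordMass, ENNReal.tsum_eq_iSup_sum]
  refine iSup_le fun S => ?_
  simpa using h (S.map (Function.Embedding.subtype _)) (by simp)

lemma wordMass_le_of_forall_length_le (h : ∀ n, wordMass {m ∈ M | m.length ≤ n} ≤ c) :
    wordMass M ≤ c := by
  refine wordMass_le_of_forall_finset fun S hS => le_trans ?_ (h (S.sup List.length))
  calc ∑ m ∈ S, (Fintype.card σ : ℝ≥0∞)⁻¹ ^ m.length = wordMass (S : Set (List σ)) :=
        (Finset.tsum_subtype' S fun m : List σ => (Fintype.card σ : ℝ≥0∞)⁻¹ ^ m.length).symm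
    _ ≤ wordMass {m ∈ M | m.length ≤ S.sup List.length} :=
        wordMass_mono fun m hm => ⟨hS hm, Finset.le_sup (f := List.length) hm⟩

/-- Kraft's inequality, for possibly infinite prefix-free families. -/
lemma PrefixFree.wordMass_le_one [Nonempty σ] (hM : PrefixFree M) : wordMass M ≤ 1 := by
  by_cases h : [] ∈ M
  · exact (wordMass_mono (hM.subset_singleton_nil h)).trans wordMass_singleton_nil.le
  refine wordMass_le_of_forall_finset fun S hS => ?_
  have hdec : InformationTheory.UniquelyDecodable (S : Set (List σ)) :=
    PrefixFree.uniquelyDecodable (fun a ha b hb => hM a (hS ha) b (hS hb)) fun h' => h (hS h')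
  have hkraft := ENNReal.ofReal_le_one.2 (InformationTheory.kraft_mcmillan_inequality hdec)
  rw [ENNReal.ofReal_sum_of_nonneg fun m _ => by positivity] at hkraft
  refine le_trans (Finset.sum_le_sum fun m _ => ?_) hkraft
  rw [ENNReal.ofReal_pow (by positivity), one_div,
    ENNReal.ofReal_inv_of_pos (by exact_mod_cast Fintype.card_pos), ENNReal.ofReal_natCast]

lemma tsum_sigma_append (A : Set (List σ)) (B : List σ → Set (List σ)) :
    ∑' x : (Σ a : A, B a.1), (Fintype.card σ : ℝ≥0∞)⁻¹ ^ (x.1.1 ++ x.2.1).length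
      = ∑' a : A, (Fintype.card σ : ℝ≥0∞)⁻¹ ^ a.1.length * wordMass (B a.1) := by
  rw [ENNReal.tsum_sigma']
  simp only [List.length_append, pow_add, ENNReal.tsum_mul_left, wordMass]

lemma wordMass_concatSet_le {A : Set (List σ)} {B : List σ → Set (List σ)}
    (h : ∀ a ∈ A, wordMass (B a) ≤ c) : wordMass (concatSet A B) ≤ wordMass A * c := by
  let f : (Σ a : A, B a.1) → concatSet A B := fun x =>
    ⟨x.1.1 ++ x.2.1, x.1.1, x.1.2, x.2.1, x.2.2, rfl⟩
  have hf : Function.Surjective f := by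
    rintro ⟨m, a, ha, b, hb, rfl⟩
    exact ⟨⟨⟨a, ha⟩, ⟨b, hb⟩⟩, rfl⟩
  refine (ENNReal.tsum_le_tsum_comp_of_surjective hf
    fun m : concatSet A B => (Fintype.card σ : ℝ≥0∞)⁻¹ ^ m.1.length).trans ?_
  rw [tsum_sigma_append, wordMass, ← ENNReal.tsum_mul_right]
  gcongr with a
  exact h a.1 a.2

lemma PrefixFree.le_wordMass_concatSet {A : Set (List σ)} {B : List σ → Set (List σ)}
    (hA : PrefixFree A) (h : ∀ a ∈ A, c ≤ wordMass (B a)) :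
    wordMass A * c ≤ wordMass (concatSet A B) := by
  let f : (Σ a : A, B a.1) → concatSet A B := fun x =>
    ⟨x.1.1 ++ x.2.1, x.1.1, x.1.2, x.2.1, x.2.2, rfl⟩
  have hf : Function.Injective f := by
    rintro ⟨⟨a, ha⟩, ⟨b, hb⟩⟩ ⟨⟨a', ha'⟩, ⟨b', hb'⟩⟩ h
    have heq : a ++ b = a' ++ b' := congrArg Subtype.val h
    obtain rfl := hA.eq_of_append_prefix_append ha ha' (by rw [heq])
    obtain rfl := List.append_cancel_left heq
    rfl
  refine le_trans ?_ (ENNReal.tsum_comp_le_tsum_of_injective hf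
    fun m : concatSet A B => (Fintype.card σ : ℝ≥0∞)⁻¹ ^ m.1.length)
  rw [tsum_sigma_append, wordMass, ← ENNReal.tsum_mul_right]
  gcongr with a
  exact h a.1 a.2

lemma wordMass_image_cons (d : σ) :
    wordMass (List.cons d '' M) = (Fintype.card σ : ℝ≥0∞)⁻¹ * wordMass M := by
  rw [wordMass, tsum_image (fun m : List σ => (Fintype.card σ : ℝ≥0∞)⁻¹ ^ m.length)
    List.cons_injective.injOn, wordMass, ← ENNReal.tsum_mul_left]
  simp only [List.length_cons, pow_succ']

lemma wordMass_eq_sum_of_nil_notMem (h : [] ∉ M) :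
    wordMass M = (Fintype.card σ : ℝ≥0∞)⁻¹ * ∑ d, wordMass {m | d :: m ∈ M} := by
  have hM : M = ⋃ d, List.cons d '' {m | d :: m ∈ M} := by
    ext (_ | ⟨d, m⟩)
    · simpa using h
    · simp
  have hdisj : univ.PairwiseDisjoint (fun d => List.cons d '' {m | d :: m ∈ M}) := by
    intro d _ d' _ hd
    refine Set.disjoint_left.2 ?_
    rintro _ ⟨m, _, rfl⟩ ⟨m', _, h'⟩
    exact hd (List.cons_eq_cons.1 h').1.symm
  conv_lhs => rw [hM]
  rw [wordMass, ENNReal.tsum_biUnion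
    (f := fun m : List σ => (Fintype.card σ : ℝ≥0∞)⁻¹ ^ m.length) hdisj, tsum_fintype,
    Finset.mul_sum]
  exact Finset.sum_congr rfl fun d _ => wordMass_image_cons d

lemma wordMass_preimage_map (e : σ ≃ σ) (M : Set (List σ)) :
    wordMass (List.map e ⁻¹' M) = wordMass M := by
  conv_rhs => rw [← Set.image_preimage_eq M (List.map_surjective_iff.2 e.surjective)]
  rw [wordMass, wordMass, tsum_image (fun m : List σ => (Fintype.card σ : ℝ≥0∞)⁻¹ ^ m.length)
    (List.map_injective_iff.2 e.injective).injOn]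
  simp only [List.length_map]

/-- `Q` holds with mass at least `p` at some stopping time: the words of some prefix-free family of
mass at least `p` all satisfy `Q`. -/
def Reach (Q : List σ → Prop) (p : ℝ≥0∞) : Prop :=
  ∃ M : Set (List σ), PrefixFree M ∧ p ≤ wordMass M ∧ ∀ m ∈ M, Q m

namespace Reach

variable {Q Q' : List σ → Prop} {p p' : ℝ≥0∞}

lemma mono (h : Reach Q p) (hp : p' ≤ p) (hQ : ∀ m, Q m → Q' m) : Reach Q' p' :=
  let ⟨M, hM, hpM, hMQ⟩ := h
  ⟨M, hM, hp.trans hpM, fun m hm => hQ m (hMQ m hm)⟩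

lemma nil (h : Q []) : Reach Q 1 :=
  ⟨{[]}, by rintro a rfl b rfl _; rfl, wordMass_singleton_nil.ge, by rintro m rfl; exact h⟩

lemma append (h : Reach Q p) (h' : ∀ a, Q a → Reach (fun b => Q' (a ++ b)) p') :
    Reach Q' (p * p') := by
  obtain ⟨M, hM, hpM, hMQ⟩ := h
  choose! B hB hpB hBQ using h'
  refine ⟨concatSet M B, hM.concat fun a ha => hB a (hMQ a ha), ?_, ?_⟩
  · refine le_trans ?_ (hM.le_wordMass_concatSet fun a ha => hpB a (hMQ a ha))
    gcongr
  · rintro _ ⟨a, ha, b, hb, rfl⟩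
    exact hBQ a (hMQ a ha) b hb

lemma map (h : Reach Q p) (e : σ ≃ σ) : Reach (fun m => Q (m.map e)) p := by
  obtain ⟨M, hM, hpM, hMQ⟩ := h
  exact ⟨_, hM.preimage_map e.injective, hpM.trans (wordMass_preimage_map e M).ge,
    fun m hm => hMQ _ hm⟩

end Reach

end Words

/-! ### Lattice walks -/

section Steps

/-- The four lattice directions; adding `1` is a quarter turn and negation is the reflection in the
horizontal axis. -/
abbrev Dir : Type := Fin 4

/-- The unit vector of a direction. -/
def vec : Dir → Lat := ![(1, 0), (0, 1), (-1, 0), (0, -1)]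

/-- The total displacement of a word of steps. Walks are encoded by their starting point `z` and
their word of steps `m`, so that their vertices are the points `z + disp u`, `u <+: m`. -/
def disp (m : List Dir) : Lat := (m.map vec).sum

@[simp] lemma disp_nil : disp [] = 0 := rfl

@[simp] lemma disp_cons (d : Dir) (m : List Dir) : disp (d :: m) = vec d + disp m := by
  simp [disp]

@[simp] lemma disp_append (a b : List Dir) : disp (a ++ b) = disp a + disp b := by
  simp [disp]

lemma vec_cases (d : Dir) :
    vec d = (1, 0) ∨ vec d = (0, 1) ∨ vec d = (-1, 0) ∨ vec d = (0, -1) := by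
  fin_cases d <;> simp [vec]

/-- Rotation of the lattice by `k` quarter turns. -/
def rot (k : Dir) : Lat →+ Lat where
  toFun z := ![z, (-z.2, z.1), -z, (z.2, -z.1)] k
  map_zero' := by fin_cases k <;> rfl
  map_add' z w := by fin_cases k <;> simp [add_comm]

/-- Rotation of directions by `k` quarter turns. -/
def rotDir (k : Dir) : Dir ≃ Dir := Equiv.addRight k

/-- Reflection of the lattice in the horizontal axis. -/
def reflect : Lat →+ Lat := (AddMonoidHom.id ℤ).prodMap (-AddMonoidHom.id ℤ)

/-- Reflection of directions in the horizontal axis. -/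
def reflectDir : Dir ≃ Dir := Equiv.neg Dir

@[simp] lemma rot_zero_apply (z : Lat) : rot 0 z = z := rfl

@[simp] lemma rot_one_apply (z : Lat) : rot 1 z = (-z.2, z.1) := rfl

@[simp] lemma rot_two_apply (z : Lat) : rot 2 z = (-z.1, -z.2) := rfl

@[simp] lemma rot_three_apply (z : Lat) : rot 3 z = (z.2, -z.1) := rfl

@[simp] lemma reflect_apply (z : Lat) : reflect z = (z.1, -z.2) := rfl

lemma vec_rotDir (k d : Dir) : vec (rotDir k d) = rot k (vec d) := by
  fin_cases k <;> fin_cases d <;> rfl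

lemma vec_reflectDir (d : Dir) : vec (reflectDir d) = reflect (vec d) := by
  fin_cases d <;> rfl

lemma linf_rot (k : Dir) (z : Lat) : linf (rot k z) = linf z := by
  fin_cases k <;> simp [linf, max_comm]

lemma linf_reflect (z : Lat) : linf (reflect z) = linf z := by
  simp [linf]

lemma lt_linf {r : ℤ} {z : Lat} :
    r < linf z ↔ r < z.1 ∨ r < -z.1 ∨ r < z.2 ∨ r < -z.2 := by
  rw [linf, lt_max_iff, lt_abs, lt_abs, or_assoc]

lemma linf_le {r : ℤ} {z : Lat} :
    linf z ≤ r ↔ z.1 ≤ r ∧ -z.1 ≤ r ∧ z.2 ≤ r ∧ -z.2 ≤ r := by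
  rw [linf, max_le_iff, abs_le', abs_le', and_assoc]

lemma le_linf {r : ℤ} {z : Lat} :
    r ≤ linf z ↔ r ≤ z.1 ∨ r ≤ -z.1 ∨ r ≤ z.2 ∨ r ≤ -z.2 := by
  rw [linf, le_max_iff, le_abs, le_abs, or_assoc]

lemma linf_lt {r : ℤ} {z : Lat} :
    linf z < r ↔ z.1 < r ∧ -z.1 < r ∧ z.2 < r ∧ -z.2 < r := by
  rw [← not_le, le_linf]
  push Not
  rfl

variable {e : Dir → Dir} {f : Lat →+ Lat}

lemma disp_map (hef : ∀ d, vec (e d) = f (vec d)) (m : List Dir) :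
    disp (m.map e) = f (disp m) := by
  simp [disp, map_list_sum, Function.comp_def, hef]

lemma exists_prefix_eq_map {u m : List Dir} (h : u <+: m.map e) :
    ∃ v, v <+: m ∧ u = v.map e := by
  refine ⟨m.take u.length, List.take_prefix _ _, ?_⟩
  rw [List.map_take]
  exact List.prefix_iff_eq_take.1 h

/-- All the vertices of the walk with starting point `z` and word of steps `m` lie in `G`. -/
def VisitsOnly (G : Set Lat) (z : Lat) (m : List Dir) : Prop :=
  ∀ u, u <+: m → z + disp u ∈ G

namespace VisitsOnly

variable {G G' : Set Lat} {z : Lat} {a b m : List Dir}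

lemma mono (h : VisitsOnly G z m) (hG : G ⊆ G') : VisitsOnly G' z m := fun u hu => hG (h u hu)

lemma nil (hz : z ∈ G) : VisitsOnly G z [] := fun u hu => by
  simpa [List.prefix_nil.1 hu] using hz

lemma append (ha : VisitsOnly G z a) (hb : VisitsOnly G (z + disp a) b) :
    VisitsOnly G z (a ++ b) := by
  intro u hu
  rcases List.prefix_or_prefix_of_prefix hu (List.prefix_append a b) with h | ⟨v, rfl⟩
  · exact ha u h
  · rw [List.prefix_append_right_inj] at hu
    simpa [add_assoc] using hb v hu

lemma preimage (hef : ∀ d, vec (e d) = f (vec d)) (h : VisitsOnly G (f z) (m.map e)) :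
    VisitsOnly (f ⁻¹' G) z m := fun u hu => by
  simpa [disp_map hef] using h _ (hu.map e)

end VisitsOnly

/-- The walks from `z` which stay in `G` up to their last step, which ends in `E`; when `E` is the
complement of `G`, these are the walks stopped at their exit from `G`. -/
def walksThrough (G E : Set Lat) (z : Lat) : Set (List Dir) :=
  {m | z + disp m ∈ E ∧ ∀ u, u <+: m → u ≠ m → z + disp u ∈ G}

section WalksThrough

variable {G E : Set Lat} {z : Lat} {m : List Dir}

lemma prefixFree_walksThrough (h : Disjoint G E) (z : Lat) :
    PrefixFree (walksThrough G E z) := by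
  intro a ha b hb hab
  by_contra hne
  exact Set.disjoint_left.1 h (hb.2 a hab hne) ha.1

lemma walksThrough_of_notMem (hz : z ∉ G) : walksThrough G E z ⊆ {[]} := by
  intro m hm
  by_contra hne
  exact hz (by simpa using hm.2 [] List.nil_prefix (Ne.symm hne))

lemma nil_mem_walksThrough : [] ∈ walksThrough G E z ↔ z ∈ E := by
  simp +contextual [walksThrough]

lemma cons_mem_walksThrough (hz : z ∈ G) {d : Dir} :
    d :: m ∈ walksThrough G E z ↔ m ∈ walksThrough G E (z + vec d) := by
  simp only [walksThrough, Set.mem_ofPred_eq, disp_cons, ← add_assoc]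
  refine and_congr Iff.rfl ⟨fun h u hu hne => ?_, fun h u hu hne => ?_⟩
  · simpa [← add_assoc] using h (d :: u) (by simpa using hu) (by simpa using hne)
  · cases u with
    | nil => simpa using hz
    | cons d' u =>
      obtain ⟨rfl, hum⟩ := List.cons_prefix_cons.1 hu
      simpa [← add_assoc] using h u hum (by simpa using hne)

lemma wordMass_walksThrough_eq_sum (hG : z ∈ G) (hE : z ∉ E) :
    wordMass (walksThrough G E z) = 4⁻¹ * ∑ d, wordMass (walksThrough G E (z + vec d)) := by
  rw [wordMass_eq_sum_of_nil_notMem (mt nil_mem_walksThrough.1 hE)]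
  simp [cons_mem_walksThrough hG]

lemma wordMass_walksThrough_length_le_succ (hG : z ∈ G) (hE : z ∉ E) (n : ℕ) :
    wordMass {m ∈ walksThrough G E z | m.length ≤ n + 1} =
      4⁻¹ * ∑ d, wordMass {m ∈ walksThrough G E (z + vec d) | m.length ≤ n} := by
  rw [wordMass_eq_sum_of_nil_notMem fun h => hE (nil_mem_walksThrough.1 h.1)]
  simp [cons_mem_walksThrough hG]

lemma map_mem_walksThrough {G' E' : Set Lat} (hef : ∀ d, vec (e d) = f (vec d))
    (hG : MapsTo f G G') (hE : MapsTo f E E') (hm : m ∈ walksThrough G E z) :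
    m.map e ∈ walksThrough G' E' (f z) := by
  refine ⟨?_, fun u hu hne => ?_⟩
  · simpa [disp_map hef] using hE hm.1
  · obtain ⟨v, hv, rfl⟩ := exists_prefix_eq_map hu
    simpa [disp_map hef] using hG (hm.2 v hv fun h => hne (by rw [h]))

end WalksThrough

lemma le_of_superharmonic_on_compl {H : Set Lat} (hH : Hᶜ.Finite) {φ : Lat → ℝ} {c : ℝ}
    (hc : ∀ z ∈ H, c ≤ φ z) (hφ : ∀ z ∉ H, ∑ d, φ (z + vec d) ≤ 4 * φ z) (z : Lat) :
    c ≤ φ z := by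
  by_contra! hz
  have hzH : z ∈ Hᶜ := fun h => (hc z h).not_gt hz
  obtain ⟨z₀, hz₀, hmin⟩ := Set.exists_min_image _ φ hH ⟨z, hzH⟩
  have hlt : φ z₀ < c := (hmin z hzH).trans_lt hz
  have hglobal : ∀ w, φ z₀ ≤ φ w := fun w => by
    by_cases hw : w ∈ H
    · exact hlt.le.trans (hc w hw)
    · exact hmin w hw
  -- The minimum propagates along the whole half-line to the right of `z₀`.
  have hray : ∀ k : ℕ, z₀ + ((k : ℤ), 0) ∈ Hᶜ ∧ φ (z₀ + ((k : ℤ), 0)) ≤ φ z₀ := by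
    intro k
    induction k with
    | zero =>
      have : z₀ + (((0 : ℕ) : ℤ), (0 : ℤ)) = z₀ := by ext <;> simp
      rw [this]
      exact ⟨hz₀, le_rfl⟩
    | succ k ih =>
      have hstep := hφ _ ih.1
      have heq : z₀ + (((k + 1 : ℕ) : ℤ), 0) = z₀ + ((k : ℤ), 0) + vec 0 := by
        ext <;> simp [vec, add_assoc]
      have hle : φ (z₀ + (((k + 1 : ℕ) : ℤ), 0)) ≤ φ z₀ := by
        rw [Fin.sum_univ_four] at hstep
        rw [heq]
        linarith [hglobal (z₀ + ((k : ℤ), 0) + vec 1), hglobal (z₀ + ((k : ℤ), 0) + vec 2),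
          hglobal (z₀ + ((k : ℤ), 0) + vec 3)]
      exact ⟨fun h => (hc _ h).not_gt (hle.trans_lt hlt), hle⟩
  refine Set.infinite_of_injective_forall_mem (fun k k' h => ?_) (fun k => (hray k).1) hH
  simpa using h

lemma wordMass_walksThrough_compl_eq_one {H : Set Lat} (hH : Hᶜ.Finite) (z : Lat) :
    wordMass (walksThrough Hᶜ H z) = 1 := by
  have hle : ∀ z, wordMass (walksThrough Hᶜ H z) ≤ 1 := fun z =>
    (prefixFree_walksThrough disjoint_compl_left z).wordMass_le_one
  have hfin : ∀ z, wordMass (walksThrough Hᶜ H z) ≠ ⊤ := fun z =>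
    ne_top_of_le_ne_top (by simp) (hle z)
  refine le_antisymm (hle z) ((ENNReal.toReal_le_toReal ENNReal.one_ne_top (hfin z)).1 ?_)
  refine le_of_superharmonic_on_compl hH (φ := fun z => (wordMass (walksThrough Hᶜ H z)).toReal)
    (fun w hw => ?_) (fun w hw => ?_) z
  · refine ENNReal.toReal_mono (hfin w) ?_
    rw [← wordMass_singleton_nil (σ := Dir)]
    exact wordMass_mono (by simpa [nil_mem_walksThrough] using hw)
  · rw [wordMass_walksThrough_eq_sum hw hw, ENNReal.toReal_mul,
      ENNReal.toReal_sum fun d _ => hfin _]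
    simp

end Steps

/-! ### Leaving a box -/

section Exit

variable {l : ℤ} {m : List Dir}

lemma finite_compl_le_linf (l : ℤ) : {w | l ≤ linf w}ᶜ.Finite := by
  refine ((Set.finite_Icc (-l) l).prod (Set.finite_Icc (-l) l)).subset fun w hw => ?_
  have := linf_lt.1 (not_le.1 hw)
  simp only [Set.mem_prod, Set.mem_Icc]
  omega

/-- The walks from the origin up to their exit from the box `{w | linf w < l}`. -/
def boxExits (l : ℤ) : Set (List Dir) := walksThrough {w | l ≤ linf w}ᶜ {w | l ≤ linf w} 0

lemma linf_disp_lt_of_mem_boxExits (hm : m ∈ boxExits l) {u : List Dir} (hu : u <+: m)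
    (hne : u ≠ m) : linf (disp u) < l := by
  simpa using hm.2 u hu hne

lemma disp_of_mem_boxExits (hl : 1 ≤ l) (hm : m ∈ boxExits l) :
    ((disp m).1 = l ∨ (disp m).1 = -l) ∧ -l < (disp m).2 ∧ (disp m).2 < l ∨
      ((disp m).2 = l ∨ (disp m).2 = -l) ∧ -l < (disp m).1 ∧ (disp m).1 < l := by
  have hout : l ≤ linf (disp m) := by simpa using hm.1
  rcases List.eq_nil_or_concat m with rfl | ⟨u, d, rfl⟩
  · rw [disp_nil, le_linf] at hout
    simp only [Prod.fst_zero, Prod.snd_zero] at hout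
    omega
  · have hin := linf_disp_lt_of_mem_boxExits hm (u := u) (by simp) (by simp)
    rw [le_linf] at hout
    rw [linf_lt] at hin
    simp only [List.concat_eq_append, disp_append, disp_cons, disp_nil, Prod.fst_add, Prod.snd_add,
      Prod.fst_zero, Prod.snd_zero] at hout ⊢
    rcases vec_cases d with h | h | h | h <;> rw [h] at hout ⊢ <;> dsimp only at hout ⊢ <;> omega

lemma map_mem_boxExits {e : Dir → Dir} {f : Lat →+ Lat} (hef : ∀ d, vec (e d) = f (vec d))
    (hf : ∀ w, linf (f w) = linf w) (hm : m ∈ boxExits l) : m.map e ∈ boxExits l := by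
  rw [boxExits, ← map_zero f]
  exact map_mem_walksThrough hef (fun w hw => by simpa [hf] using hw)
    (fun w hw => by simpa [hf] using hw) hm

lemma quarter_le_wordMass_boxExits_right (hl : 1 ≤ l) :
    (4⁻¹ : ℝ≥0∞) ≤ wordMass {m ∈ boxExits l | (disp m).1 = l} := by
  set M := {m ∈ boxExits l | (disp m).1 = l}
  have hcover : boxExits l ⊆ ⋃ k, List.map (rotDir k) ⁻¹' M := by
    intro m hm
    have hside : ∃ k, (rot k (disp m)).1 = l := by
      rcases disp_of_mem_boxExits hl hm with ⟨h | h, -⟩ | ⟨h | h, -⟩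
      · exact ⟨0, by simp [h]⟩
      · exact ⟨2, by simp [h]⟩
      · exact ⟨3, by simp [h]⟩
      · exact ⟨1, by simp [h]⟩
    obtain ⟨k, hk⟩ := hside
    refine Set.mem_iUnion.2 ⟨k, map_mem_boxExits (vec_rotDir k) (linf_rot k) hm, ?_⟩
    rwa [disp_map (vec_rotDir k)]
  rw [ENNReal.inv_le_iff_le_mul (by simp) (by simp)]
  calc (1 : ℝ≥0∞) = wordMass (boxExits l) :=
        (wordMass_walksThrough_compl_eq_one (finite_compl_le_linf l) 0).symm
    _ ≤ ∑' k : Dir, wordMass (List.map (rotDir k) ⁻¹' M) :=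
        (wordMass_mono hcover).trans (wordMass_iUnion_le _)
    _ = 4 * wordMass M := by simp [wordMass_preimage_map]

lemma wordMass_boxExits_right_le (l : ℤ) :
    wordMass {m ∈ boxExits l | (disp m).1 = l} ≤
      2 * wordMass {m ∈ boxExits l | (disp m).1 = l ∧ 0 ≤ (disp m).2} := by
  set M := {m ∈ boxExits l | (disp m).1 = l ∧ 0 ≤ (disp m).2}
  have hcover : {m ∈ boxExits l | (disp m).1 = l} ⊆ M ∪ List.map reflectDir ⁻¹' M := by
    rintro m ⟨hm, hml⟩
    by_cases hpos : 0 ≤ (disp m).2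
    · exact Or.inl ⟨hm, hml, hpos⟩
    · refine Or.inr ⟨map_mem_boxExits vec_reflectDir linf_reflect hm, ?_⟩
      simp only [disp_map vec_reflectDir, reflect_apply]
      omega
  calc wordMass {m ∈ boxExits l | (disp m).1 = l}
      ≤ wordMass M + wordMass (List.map reflectDir ⁻¹' M) :=
        (wordMass_mono hcover).trans (wordMass_union_le _ _)
    _ = 2 * wordMass M := by rw [wordMass_preimage_map, two_mul]

/-- With mass at least `p`, the walk from `z` reaches `T` without leaving `G`. -/
def Travels (G : Set Lat) (z : Lat) (T : Set Lat) (p : ℝ≥0∞) : Prop :=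
  Reach (fun m => VisitsOnly G z m ∧ z + disp m ∈ T) p

namespace Travels

variable {G G' T T' : Set Lat} {z : Lat} {p p' : ℝ≥0∞}

lemma mono (h : Travels G z T p) (hp : p' ≤ p) (hG : G ⊆ G') (hT : T ⊆ T') :
    Travels G' z T' p' :=
  Reach.mono h hp fun _ hm => ⟨hm.1.mono hG, hT hm.2⟩

lemma of_mem (hp : p ≤ 1) (hG : z ∈ G) (hT : z ∈ T) : Travels G z T p :=
  Reach.mono (Reach.nil ⟨VisitsOnly.nil hG, by simpa using hT⟩) hp fun _ hm => hm

lemma append (h : Travels G z T p) (h' : ∀ w ∈ T, Travels G w T' p') :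
    Travels G z T' (p * p') :=
  Reach.append h fun _ ha => Reach.mono (h' _ ha.2) le_rfl fun _ hb =>
    ⟨ha.1.append hb.1, by simpa [add_assoc] using hb.2⟩

lemma preimage {e : Dir ≃ Dir} {f : Lat →+ Lat} (hef : ∀ d, vec (e d) = f (vec d))
    {z' : Lat} (hz : f z = z') (h : Travels G z' T p) :
    Travels (f ⁻¹' G) z (f ⁻¹' T) p := by
  subst hz
  refine Reach.mono (Reach.map h e) le_rfl fun m hm => ⟨hm.1.preimage hef, ?_⟩
  simpa [disp_map hef] using hm.2

lemma translate (h : Travels G 0 T p) : Travels ((· - z) ⁻¹' G) z ((· - z) ⁻¹' T) p :=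
  Reach.mono h le_rfl fun m hm =>
    And.intro (fun u hu => by simpa using hm.1 u hu) (by simpa using hm.2)

end Travels

lemma travels_upperRightSide (hl : 1 ≤ l) :
    Travels {w | -l < w.1 ∧ -l < w.2 ∧ w.2 < l} 0
      {w | w.1 = l ∧ 0 ≤ w.2 ∧ w.2 < l} 8⁻¹ := by
  refine ⟨{m ∈ boxExits l | (disp m).1 = l ∧ 0 ≤ (disp m).2}, fun a ha b hb =>
    prefixFree_walksThrough disjoint_compl_left 0 a ha.1 b hb.1, ?_, ?_⟩
  · rw [show (8 : ℝ≥0∞) = 2 * 4 by norm_num, ENNReal.mul_inv (by simp) (by simp),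
      ENNReal.inv_mul_le_iff (by simp) (by simp)]
    exact (quarter_le_wordMass_boxExits_right hl).trans (wordMass_boxExits_right_le l)
  · rintro m ⟨hm, hright, hup⟩
    have hend := disp_of_mem_boxExits hl hm
    refine ⟨fun u hu => ?_, ?_⟩
    · by_cases hum : u = m
      · simp only [hum, zero_add, Set.mem_ofPred_eq]
        omega
      · have := linf_lt.1 (linf_disp_lt_of_mem_boxExits hm hu hum)
        simp only [zero_add, Set.mem_ofPred_eq]
        omega
    · simp only [zero_add, Set.mem_ofPred_eq]
      omega

lemma travels_band_step (hl : 1 ≤ l) {c : ℤ} {z : Lat} (hz : |z.2 - c| < l) :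
    Travels {w | z.1 - l < w.1 ∧ |w.2 - c| ≤ 2 * (l - 1)} z
      {w | w.1 = z.1 + l ∧ |w.2 - c| < l} 8⁻¹ := by
  simp only [abs_lt, abs_le] at hz ⊢
  rcases le_total z.2 c with h | h
  · refine (travels_upperRightSide hl).translate.mono le_rfl ?_ ?_ <;> intro w <;>
      simp only [Set.mem_preimage, Set.mem_ofPred_eq, Prod.fst_sub, Prod.snd_sub] <;> omega
  · refine ((travels_upperRightSide hl).preimage vec_reflectDir
      (map_zero reflect)).translate.mono le_rfl ?_ ?_ <;> intro w <;>
      simp only [Set.mem_preimage, Set.mem_ofPred_eq, reflect_apply, Prod.fst_sub,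
        Prod.snd_sub] <;> omega

lemma inv_eight_pow_le_one (K : ℕ) : (8⁻¹ : ℝ≥0∞) ^ K ≤ 1 :=
  pow_le_one' (by simp) K

lemma travels_right (hl : 1 ≤ l) {c x : ℤ} (K : ℕ) {z : Lat} (hz : |z.2 - c| < l)
    (hx : z.1 < x + l) (hK : x ≤ z.1 + K * l) :
    Travels {w | z.1 - l < w.1 ∧ |w.2 - c| ≤ 2 * (l - 1)} z
      {w | x ≤ w.1 ∧ w.1 < x + l ∧ |w.2 - c| < l} (8⁻¹ ^ K) := by
  induction K generalizing z with
  | zero =>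
    have hband : |z.2 - c| ≤ 2 * (l - 1) := by rw [abs_lt] at hz; rw [abs_le]; omega
    exact .of_mem (inv_eight_pow_le_one 0) ⟨by omega, hband⟩ ⟨by simpa using hK, hx, hz⟩
  | succ K ih =>
    push_cast at hK
    by_cases hxz : x ≤ z.1
    · have hband : |z.2 - c| ≤ 2 * (l - 1) := by rw [abs_lt] at hz; rw [abs_le]; omega
      exact .of_mem (inv_eight_pow_le_one _) ⟨by omega, hband⟩ ⟨hxz, hx, hz⟩
    rw [pow_succ']
    refine (travels_band_step hl hz).append fun w hw => ?_
    obtain ⟨hw₁, hw₂⟩ := hw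
    refine (ih hw₂ (by omega) (by linarith)).mono le_rfl (fun v hv => ⟨?_, hv.2⟩) subset_rfl
    linarith [hv.1]

lemma travels_up (hl : 1 ≤ l) {y : ℤ} (K : ℕ) {z : Lat} (hy : z.2 < y + l)
    (hK : y ≤ z.2 + K * l) :
    Travels {w | |w.1 - z.1| ≤ 2 * (l - 1) ∧ z.2 - l < w.2} z
      {w | |w.1 - z.1| < l ∧ y ≤ w.2 ∧ w.2 < y + l} (8⁻¹ ^ K) := by
  refine ((travels_right hl (z := rot 3 z) (c := -z.1) (x := y) K (by simpa) (by simpa)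
    (by simpa)).preimage (vec_rotDir 3) rfl).mono le_rfl ?_ ?_ <;> intro w <;>
    simp only [Set.mem_preimage, Set.mem_ofPred_eq, rot_three_apply, abs_le, abs_lt] <;> omega

lemma travels_down (hl : 1 ≤ l) {y : ℤ} (K : ℕ) {z : Lat} (hy : y - l < z.2)
    (hK : z.2 - K * l ≤ y) :
    Travels {w | |w.1 - z.1| ≤ 2 * (l - 1) ∧ w.2 < z.2 + l} z
      {w | |w.1 - z.1| < l ∧ w.2 ≤ y ∧ y - l < w.2} (8⁻¹ ^ K) := by
  refine ((travels_right hl (z := rot 1 z) (c := z.1) (x := -y) K (by simpa)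
    (by rw [rot_one_apply]; linarith) (by rw [rot_one_apply]; linarith)).preimage
    (vec_rotDir 1) rfl).mono le_rfl ?_ ?_ <;> intro w <;>
    simp only [Set.mem_preimage, Set.mem_ofPred_eq, rot_one_apply, abs_le, abs_lt] <;> omega

lemma travels_left (hl : 1 ≤ l) {x : ℤ} (K : ℕ) {z : Lat} (hx : x - l < z.1)
    (hK : z.1 - K * l ≤ x) :
    Travels {w | |w.2 - z.2| ≤ 2 * (l - 1) ∧ w.1 < z.1 + l} z
      {w | |w.2 - z.2| < l ∧ w.1 ≤ x ∧ x - l < w.1} (8⁻¹ ^ K) := by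
  refine ((travels_right hl (z := rot 2 z) (c := -z.2) (x := -x) K (by simpa)
    (by rw [rot_two_apply]; linarith) (by rw [rot_two_apply]; linarith)).preimage
    (vec_rotDir 2) rfl).mono le_rfl ?_ ?_ <;> intro w <;>
    simp only [Set.mem_preimage, Set.mem_ofPred_eq, rot_two_apply, abs_le, abs_lt] <;> omega

end Exit

/-! ### Making a circuit -/

section Circuit

/-- `l` is a width of bands, inside the annulus of inner radius `r` and outer radius `s`, whose
crossings can be chained by `travels_right`; `N` bounds the number of widths in the outer radius. -/
structure BandScale (r s l : ℤ) (N : ℕ) : Prop where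
  one_le_inner : 1 ≤ r
  one_le_width : 1 ≤ l
  width_le : 4 * (l - 1) ≤ s - r - 1
  outer_le : s ≤ N * l

lemma BandScale.inner_lt_outer {r s l : ℤ} {N : ℕ} (h : BandScale r s l N) : r < s := by
  have := h.width_le
  have := h.one_le_width
  omega

/-- The walk from `z` with word of steps `v` crosses the rectangle `[-s, s] × [r + 1, s]` from left
to right. -/
def CrossesTop (r s : ℤ) (z : Lat) (v : List Dir) : Prop :=
  VisitsOnly {w | r + 1 ≤ w.2 ∧ w.2 ≤ s} z v ∧ z.1 ≤ -s ∧ s ≤ (z + disp v).1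

/-- Up to rotation by `k` quarter turns, some part of the walk from `z` with word of steps `m`
crosses the rectangle `[-s, s] × [r + 1, s]`. -/
def CrossesSide (r s : ℤ) (k : Dir) (z : Lat) (m : List Dir) : Prop :=
  ∃ u v w, m = u ++ v ++ w ∧ CrossesTop r s (rot k (z + disp u)) (v.map (rotDir k))

/-- The walk from `z` with word of steps `m` crosses the four sides of the annulus with radii `r`
and `s`; the crossings together form a circuit around `B_r`. -/
def HasCircuit (r s : ℤ) (z : Lat) (m : List Dir) : Prop :=
  ∀ k, CrossesSide r s k z m

variable {r s l : ℤ} {N : ℕ} {k : Dir} {z : Lat} {a b m : List Dir}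

lemma CrossesSide.append_right (h : CrossesSide r s k z a) (b : List Dir) :
    CrossesSide r s k z (a ++ b) := by
  obtain ⟨u, v, w, rfl, hv⟩ := h
  exact ⟨u, v, w ++ b, by simp, hv⟩

lemma CrossesSide.append_left (a : List Dir) (h : CrossesSide r s k (z + disp a) b) :
    CrossesSide r s k z (a ++ b) := by
  obtain ⟨u, v, w, rfl, hv⟩ := h
  exact ⟨a ++ u, v, w, by simp, by simpa [add_assoc] using hv⟩

namespace BandScale

lemma outer_le_mul (h : BandScale r s l N) : 5 * s ≤ (5 * N : ℕ) * l := by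
  push_cast
  linarith [h.outer_le]

lemma travels_off_right_side (h : BandScale r s l N) (hz : s ≤ linf z) (hz' : linf z ≤ 2 * s) :
    Travels {w | r < linf w} z
      {w | (s ≤ w.2 ∨ s ≤ -w.2 ∨ w.1 ≤ -s) ∧ |w.1| ≤ 3 * s ∧ |w.2| ≤ 2 * s} (8⁻¹ ^ (5 * N)) := by
  have hN := h.outer_le_mul
  obtain ⟨hr, hl, hwidth, -⟩ := h
  rw [le_linf] at hz
  rw [linf_le] at hz'
  by_cases hoff : s ≤ z.2 ∨ s ≤ -z.2 ∨ z.1 ≤ -s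
  · exact .of_mem (inv_eight_pow_le_one _) (lt_linf.2 (by omega))
      ⟨hoff, abs_le.2 (by omega), abs_le.2 (by omega)⟩
  · refine (travels_up hl (y := s) (5 * N) (by omega) (by omega)).mono le_rfl ?_ ?_ <;>
      intro w <;> simp only [Set.mem_ofPred_eq, abs_le, abs_lt, lt_linf] <;> omega

lemma travels_past_left_side (h : BandScale r s l N) (hz : s ≤ z.2 ∨ s ≤ -z.2 ∨ z.1 ≤ -s)
    (hz₁ : |z.1| ≤ 3 * s) (hz₂ : |z.2| ≤ 2 * s) :
    Travels {w | r < linf w} z {w | w.1 ≤ -(2 * s) ∧ |w.1| ≤ 3 * s ∧ |w.2| ≤ 3 * s}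
      (8⁻¹ ^ (5 * N)) := by
  have hN := h.outer_le_mul
  obtain ⟨hr, hl, hwidth, -⟩ := h
  rw [abs_le] at hz₁ hz₂
  by_cases hleft : z.1 ≤ -(2 * s)
  · exact .of_mem (inv_eight_pow_le_one _) (lt_linf.2 (by omega))
      ⟨hleft, abs_le.2 (by omega), abs_le.2 (by omega)⟩
  · refine (travels_left hl (x := -(2 * s)) (5 * N) (by omega) (by omega)).mono le_rfl ?_ ?_ <;>
      intro w <;> simp only [Set.mem_ofPred_eq, abs_le, abs_lt, lt_linf] <;> omega

lemma travels_to_top_band (h : BandScale r s l N) (hz : z.1 ≤ -(2 * s)) (hz₁ : |z.1| ≤ 3 * s)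
    (hz₂ : |z.2| ≤ 3 * s) :
    Travels {w | r < linf w} z
      {w | w.1 ≤ -s ∧ |w.1| ≤ 4 * s ∧ |w.2 - (s - 2 * (l - 1))| < l} (8⁻¹ ^ (5 * N)) := by
  have hN := h.outer_le_mul
  obtain ⟨hr, hl, hwidth, -⟩ := h
  rw [abs_le] at hz₁ hz₂
  rcases le_total z.2 (s - 2 * (l - 1)) with hlow | hhigh
  · refine (travels_up hl (y := s - 2 * (l - 1)) (5 * N) (by omega)
      (by omega)).mono le_rfl ?_ ?_ <;>
      intro w <;> simp only [Set.mem_ofPred_eq, abs_le, abs_lt, lt_linf] <;> omega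
  · refine (travels_down hl (y := s - 2 * (l - 1)) (5 * N) (by omega)
      (by omega)).mono le_rfl ?_ ?_ <;>
      intro w <;> simp only [Set.mem_ofPred_eq, abs_le, abs_lt, lt_linf] <;> omega

lemma reach_crossesTop_of_band (h : BandScale r s l N) (hz : z.1 ≤ -s) (hz₁ : |z.1| ≤ 4 * s)
    (hz₂ : |z.2 - (s - 2 * (l - 1))| < l) :
    Reach (fun m => CrossesTop r s z m ∧ s ≤ linf (z + disp m) ∧ linf (z + disp m) ≤ 2 * s)
      (8⁻¹ ^ (5 * N)) := by
  have hN := h.outer_le_mul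
  obtain ⟨hr, hl, hwidth, -⟩ := h
  rw [abs_le] at hz₁
  refine Reach.mono (travels_right hl (x := s) (5 * N) hz₂ (by omega) (by omega)) le_rfl ?_
  rintro m ⟨hvisit, hend⟩
  simp only [Set.mem_ofPred_eq, abs_lt] at hend
  refine ⟨⟨hvisit.mono fun w => ?_, hz, hend.1⟩, ?_, ?_⟩
  · simp only [Set.mem_ofPred_eq, abs_le]
    omega
  · rw [le_linf]
    omega
  · rw [linf_le]
    omega

lemma reach_crossesTop (h : BandScale r s l N) (hz : s ≤ linf z) (hz' : linf z ≤ 2 * s) :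
    Reach (fun m => (VisitsOnly {w | r < linf w} z m ∧
        z + disp m ∈ {w | s ≤ linf w ∧ linf w ≤ 2 * s}) ∧
      ∃ u v, m = u ++ v ∧ CrossesTop r s (z + disp u) v) (8⁻¹ ^ (20 * N)) := by
  have hband := ((h.travels_off_right_side hz hz').append fun w hw =>
    h.travels_past_left_side hw.1 hw.2.1 hw.2.2).append fun w hw =>
    h.travels_to_top_band hw.1 hw.2.1 hw.2.2
  rw [show (8⁻¹ : ℝ≥0∞) ^ (20 * N) =
    8⁻¹ ^ (5 * N) * 8⁻¹ ^ (5 * N) * 8⁻¹ ^ (5 * N) * 8⁻¹ ^ (5 * N) by ring]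
  refine Reach.append hband fun a ha => Reach.mono
    (h.reach_crossesTop_of_band ha.2.1 ha.2.2.1 ha.2.2.2) le_rfl fun b hb => ?_
  have hvisit : VisitsOnly {w | r < linf w} (z + disp a) b :=
    hb.1.1.mono fun w hw => lt_linf.2 (by have := hw.1; omega)
  exact ⟨⟨ha.1.append hvisit, by simpa [add_assoc] using hb.2⟩, a, b, rfl, hb.1⟩

lemma reach_crossesSide (h : BandScale r s l N) (k : Dir) (hz : s ≤ linf z)
    (hz' : linf z ≤ 2 * s) :
    Reach (fun m => (VisitsOnly {w | r < linf w} z m ∧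
        z + disp m ∈ {w | s ≤ linf w ∧ linf w ≤ 2 * s}) ∧
      CrossesSide r s k z m) (8⁻¹ ^ (20 * N)) := by
  have htop := Reach.map (h.reach_crossesTop (z := rot k z) (by rwa [linf_rot])
    (by rwa [linf_rot])) (rotDir k)
  refine Reach.mono htop le_rfl ?_
  rintro m ⟨⟨hvisit, hend⟩, u, v, huv, hcross⟩
  refine ⟨⟨by simpa [linf_rot] using hvisit.preimage (vec_rotDir k), ?_⟩, ?_⟩
  · simpa only [disp_map (vec_rotDir k), ← map_add, Set.mem_ofPred_eq, linf_rot] using hend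
  · obtain ⟨u, v, rfl, rfl, rfl⟩ := List.map_eq_append_iff.1 huv
    refine ⟨u, v, [], by simp, ?_⟩
    rwa [map_add, ← disp_map (vec_rotDir k)]

lemma reach_hasCircuit (h : BandScale r s l N) (hz : linf z = s) :
    Reach (fun m => VisitsOnly {w | r < linf w} z m ∧ HasCircuit r s z m) (8⁻¹ ^ (80 * N)) := by
  have hsides : ∀ n ≤ 4, Reach (fun m => (VisitsOnly {w | r < linf w} z m ∧
        z + disp m ∈ {w | s ≤ linf w ∧ linf w ≤ 2 * s}) ∧
      ∀ k : Dir, k.1 < n → CrossesSide r s k z m) ((8⁻¹ ^ (20 * N)) ^ n) := by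
    intro n
    induction n with
    | zero =>
      have hlt := h.inner_lt_outer
      have hr := h.one_le_inner
      intro _
      rw [pow_zero]
      refine Reach.nil ⟨⟨VisitsOnly.nil (by simpa [hz]), ?_⟩, by simp⟩
      simp only [disp_nil, add_zero, Set.mem_ofPred_eq]
      omega
    | succ n ih =>
      intro hn
      rw [pow_succ]
      refine Reach.append (ih (by omega)) fun a ha => ?_
      refine Reach.mono (h.reach_crossesSide ⟨n, by omega⟩ ha.1.2.1 ha.1.2.2) le_rfl ?_
      refine fun b hb => ⟨⟨ha.1.1.append hb.1.1, by simpa [add_assoc] using hb.1.2⟩, fun k hk => ?_⟩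
      rcases Nat.lt_succ_iff_lt_or_eq.1 hk with hlt | heq
      · exact (ha.2 k hlt).append_right b
      · rw [show k = ⟨n, by omega⟩ from Fin.ext heq]
        exact hb.2.append_left a
  refine Reach.mono (hsides 4 le_rfl) (le_of_eq ?_) fun m hm => ⟨hm.1.1, fun k => hm.2 k k.2⟩
  ring

end BandScale

end Circuit

/-! ### The Poisson kernel of the half-plane -/

section PoissonKernel

variable {θ : ℝ} {r s : ℤ} {x z : Lat} {n j : ℕ} {k : ℤ}

/-- The Fourier transform, in the horizontal variable, of the Poisson kernel of the half-plane seen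
from depth `j` and truncated to walks with at most `n` steps. -/
def poissonCoeff (θ : ℝ) : ℕ → ℕ → ℝ
  | _, 0 => 1
  | 0, _ + 1 => 0
  | n + 1, j + 1 => Real.cos θ / 2 * poissonCoeff θ n (j + 1) +
      (poissonCoeff θ n j + poissonCoeff θ n (j + 2)) / 4

lemma poissonCoeff_zero_right (θ : ℝ) (n : ℕ) : poissonCoeff θ n 0 = 1 := by
  cases n <;> simp [poissonCoeff]

lemma continuous_poissonCoeff (n j : ℕ) : Continuous fun θ => poissonCoeff θ n j := by
  induction n generalizing j with
  | zero => cases j <;> simp only [poissonCoeff] <;> fun_prop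
  | succ n ih => cases j <;> simp only [poissonCoeff] <;> fun_prop

lemma exp_neg_add_exp_le {x : ℝ} (hx₀ : 0 ≤ x) (hx₁ : x ≤ 1) :
    Real.exp (-(x / 2)) + Real.exp (x / 2) ≤ 2 + x ^ 2 / 2 := by
  have hsq : x ^ 2 ≤ 1 := pow_le_one₀ hx₀ hx₁
  have hcosh := Real.cosh_le_exp_half_sq (x / 2)
  have hexp : Real.exp ((x / 2) ^ 2 / 2) ≤ 1 / (1 - (x / 2) ^ 2 / 2) :=
    Real.exp_bound_div_one_sub_of_interval (by positivity) (by nlinarith)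
  have hdiv : 1 / (1 - (x / 2) ^ 2 / 2) ≤ 1 + x ^ 2 / 4 := by
    rw [div_le_iff₀ (by nlinarith)]
    nlinarith [mul_nonneg (sq_nonneg x) (sub_nonneg.2 hsq)]
  rw [Real.cosh_eq] at hcosh
  linarith

lemma abs_cos_le_one_sub (θ : ℝ) : |Real.cos θ| ≤ 1 - Real.sin θ ^ 2 / 2 := by
  have hpyth := Real.sin_sq_add_cos_sq θ
  apply abs_le_of_sq_le_sq
  · nlinarith [sq_nonneg (Real.sin θ ^ 2)]
  · nlinarith [sq_nonneg (Real.cos θ)]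

/-- The powers `exp (-sin θ / 2) ^ j` are supersolutions of the recursion of `poissonCoeff`. -/
lemma abs_cos_mul_exp_add_le (hθ : 0 ≤ Real.sin θ) :
    |Real.cos θ| / 2 * Real.exp (-(Real.sin θ / 2)) +
      (1 + Real.exp (-(Real.sin θ / 2)) ^ 2) / 4 ≤ Real.exp (-(Real.sin θ / 2)) := by
  set q := Real.exp (-(Real.sin θ / 2)) with hq
  have hq₀ : 0 < q := Real.exp_pos _
  have hinv : q * Real.exp (Real.sin θ / 2) = 1 := by
    rw [hq, ← Real.exp_add, neg_add_cancel, Real.exp_zero]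
  have hcosh : q * (q + Real.exp (Real.sin θ / 2)) ≤ q * (2 + Real.sin θ ^ 2 / 2) :=
    mul_le_mul_of_nonneg_left (exp_neg_add_exp_le hθ (Real.sin_le_one θ)) hq₀.le
  have hcos := mul_le_mul_of_nonneg_left (abs_cos_le_one_sub θ) hq₀.le
  nlinarith

lemma abs_poissonCoeff_le (hθ : 0 ≤ Real.sin θ) (n j : ℕ) :
    |poissonCoeff θ n j| ≤ Real.exp (-(Real.sin θ / 2)) ^ j := by
  induction n generalizing j with
  | zero =>
    cases j with
    | zero => simp [poissonCoeff]
    | succ j =>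
      rw [poissonCoeff, abs_zero]
      positivity
  | succ n ih =>
    cases j with
    | zero => simp [poissonCoeff]
    | succ j =>
      set q := Real.exp (-(Real.sin θ / 2))
      calc |poissonCoeff θ (n + 1) (j + 1)|
          ≤ |Real.cos θ| / 2 * |poissonCoeff θ n (j + 1)| +
              (|poissonCoeff θ n j| + |poissonCoeff θ n (j + 2)|) / 4 := by
            refine (abs_add_le _ _).trans ?_
            rw [abs_mul, abs_div, abs_div, abs_two, abs_of_pos (four_pos : (0 : ℝ) < 4)]
            gcongr
            exact abs_add_le _ _
        _ ≤ |Real.cos θ| / 2 * q ^ (j + 1) + (q ^ j + q ^ (j + 2)) / 4 := by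
            gcongr <;> exact ih _
        _ = q ^ j * (|Real.cos θ| / 2 * q + (1 + q ^ 2) / 4) := by ring
        _ ≤ q ^ j * q := by
            gcongr
            exact abs_cos_mul_exp_add_le hθ
        _ = q ^ (j + 1) := (pow_succ q j).symm

lemma exp_neg_sin_pow_le (hθ : θ ∈ Set.Icc 0 Real.pi) (j : ℕ) :
    Real.exp (-(Real.sin θ / 2)) ^ j ≤
      Real.exp (-(j / Real.pi) * θ) + Real.exp (-(j / Real.pi) * (Real.pi - θ)) := by
  have hjordan : ∀ φ, 0 ≤ φ → φ ≤ Real.pi / 2 →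
      Real.exp (-(Real.sin φ / 2)) ^ j ≤ Real.exp (-(j / Real.pi) * φ) := fun φ h₀ h₁ => by
    rw [← Real.exp_nat_mul, Real.exp_le_exp,
      show -(j / Real.pi) * φ = j * -(2 / Real.pi * φ / 2) by ring]
    gcongr
    exact Real.mul_le_sin h₀ h₁
  rcases le_total θ (Real.pi / 2) with h | h
  · exact (hjordan θ hθ.1 h).trans (le_add_of_nonneg_right (Real.exp_pos _).le)
  · refine le_trans ?_ (le_add_of_nonneg_left (Real.exp_pos _).le)
    simpa using hjordan (Real.pi - θ) (by linarith [hθ.2]) (by linarith)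

lemma integral_exp_neg_mul_le {a b : ℝ} (ha : 0 < a) :
    ∫ θ in (0 : ℝ)..b, Real.exp (-a * θ) ≤ 1 / a := by
  rw [intervalIntegral.integral_comp_mul_left (fun x => Real.exp x) (neg_ne_zero.2 ha.ne'),
    integral_exp, mul_zero, Real.exp_zero, smul_eq_mul, inv_neg, neg_mul, ← mul_neg, neg_sub,
    inv_mul_eq_div]
  gcongr
  linarith [Real.exp_pos (-a * b)]

/-- The Poisson kernel of the half-plane seen from depth `j` and horizontal distance `k`, truncated
to walks with at most `n` steps, as a Fourier integral. -/
def poissonIntegral (n : ℕ) (k : ℤ) (j : ℕ) : ℝ :=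
  1 / Real.pi * ∫ θ in (0 : ℝ)..Real.pi, poissonCoeff θ n j * Real.cos (k * θ)

lemma intervalIntegrable_poissonCoeff_mul_cos (n j : ℕ) (k : ℤ) :
    IntervalIntegrable (fun θ => poissonCoeff θ n j * Real.cos (k * θ)) volume 0 Real.pi :=
  ((continuous_poissonCoeff n j).mul (by fun_prop)).intervalIntegrable _ _

lemma integral_cos_int_mul (k : ℤ) :
    ∫ θ in (0 : ℝ)..Real.pi, Real.cos (k * θ) = if k = 0 then Real.pi else 0 := by
  split_ifs with h
  · simp [h]
  · rw [intervalIntegral.integral_comp_mul_left (fun x => Real.cos x) (Int.cast_ne_zero.2 h)]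
    simp [Real.sin_int_mul_pi]

lemma poissonIntegral_zero_right (n : ℕ) (k : ℤ) :
    poissonIntegral n k 0 = if k = 0 then 1 else 0 := by
  simp only [poissonIntegral, poissonCoeff_zero_right, one_mul, integral_cos_int_mul]
  split_ifs <;> simp

lemma poissonIntegral_zero_succ (k : ℤ) (j : ℕ) : poissonIntegral 0 k (j + 1) = 0 := by
  simp [poissonIntegral, poissonCoeff]

lemma poissonIntegral_succ_succ (n : ℕ) (k : ℤ) (j : ℕ) :
    poissonIntegral (n + 1) k (j + 1) = 4⁻¹ * (poissonIntegral n (k + 1) (j + 1) +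
      poissonIntegral n k j + poissonIntegral n (k - 1) (j + 1) +
      poissonIntegral n k (j + 2)) := by
  have hint := fun j k => intervalIntegrable_poissonCoeff_mul_cos n j k
  simp only [poissonIntegral]
  rw [← mul_add, ← mul_add, ← mul_add, mul_left_comm,
    ← intervalIntegral.integral_add (hint _ _) (hint _ _),
    ← intervalIntegral.integral_add ((hint _ _).add (hint _ _)) (hint _ _),
    ← intervalIntegral.integral_add (((hint _ _).add (hint _ _)).add (hint _ _)) (hint _ _),
    ← intervalIntegral.integral_const_mul (4⁻¹ : ℝ)]
  congr 1
  refine intervalIntegral.integral_congr fun θ _ => ?_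
  have hadd : Real.cos ((k + 1 : ℤ) * θ) + Real.cos ((k - 1 : ℤ) * θ) =
      2 * (Real.cos θ * Real.cos (k * θ)) := by
    push_cast
    rw [add_mul, sub_mul, one_mul, Real.cos_add, Real.cos_sub]
    ring
  simp only [poissonCoeff]
  linear_combination -(poissonCoeff θ n (j + 1) / 4) * hadd

lemma poissonIntegral_le (n : ℕ) (k : ℤ) (hj : 0 < j) : poissonIntegral n k j ≤ 2 / j := by
  have hj' : (0 : ℝ) < j := Nat.cast_pos.2 hj
  have ha : 0 < j / Real.pi := div_pos hj' Real.pi_pos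
  have hbound : ∀ θ ∈ Icc 0 Real.pi, poissonCoeff θ n j * Real.cos (k * θ) ≤
      Real.exp (-(j / Real.pi) * θ) + Real.exp (-(j / Real.pi) * (Real.pi - θ)) := fun θ hθ =>
    calc poissonCoeff θ n j * Real.cos (k * θ)
        ≤ |poissonCoeff θ n j| * |Real.cos (k * θ)| := (le_abs_self _).trans_eq (abs_mul _ _)
      _ ≤ |poissonCoeff θ n j| := mul_le_of_le_one_right (abs_nonneg _) (Real.abs_cos_le_one _)
      _ ≤ Real.exp (-(Real.sin θ / 2)) ^ j :=
          abs_poissonCoeff_le (Real.sin_nonneg_of_mem_Icc hθ) n j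
      _ ≤ _ := exp_neg_sin_pow_le hθ j
  have hint₁ : IntervalIntegrable (fun θ => Real.exp (-(j / Real.pi) * θ)) volume 0 Real.pi :=
    Continuous.intervalIntegrable (by fun_prop) _ _
  have hint₂ : IntervalIntegrable (fun θ => Real.exp (-(j / Real.pi) * (Real.pi - θ))) volume 0
    Real.pi := Continuous.intervalIntegrable (by fun_prop) _ _
  have hsymm : ∫ θ in (0 : ℝ)..Real.pi, Real.exp (-(j / Real.pi) * (Real.pi - θ)) =
      ∫ θ in (0 : ℝ)..Real.pi, Real.exp (-(j / Real.pi) * θ) := by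
    rw [intervalIntegral.integral_comp_sub_left (fun x => Real.exp (-(j / Real.pi) * x)), sub_self,
      sub_zero]
  have hmono := intervalIntegral.integral_mono_on Real.pi_pos.le
    (intervalIntegrable_poissonCoeff_mul_cos n j k) (hint₁.add hint₂) hbound
  rw [intervalIntegral.integral_add hint₁ hint₂, hsymm] at hmono
  have hexp := integral_exp_neg_mul_le (b := Real.pi) ha
  calc poissonIntegral n k j ≤ 1 / Real.pi * (1 / (j / Real.pi) + 1 / (j / Real.pi)) := by
        unfold poissonIntegral
        gcongr
        linarith
    _ = 2 / j := by
        field_simp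
        norm_num

lemma toReal_wordMass_halfPlane_of_boundary (n : ℕ) (hz : z.2 = x.2) :
    (wordMass {m ∈ walksThrough {w | w.2 < x.2} {x} z | m.length ≤ n}).toReal =
      poissonIntegral n (z.1 - x.1) 0 := by
  have hnil : walksThrough {w | w.2 < x.2} {x} z ⊆ {[]} := walksThrough_of_notMem (by simp [hz])
  rw [poissonIntegral_zero_right]
  split_ifs with hzx
  · obtain rfl : z = x := Prod.ext (sub_eq_zero.1 hzx) hz
    have hset : {m ∈ walksThrough {w | w.2 < z.2} {z} z | m.length ≤ n} = {[]} :=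
      Set.Subset.antisymm (fun m hm => hnil hm.1)
        (Set.singleton_subset_iff.2 ⟨nil_mem_walksThrough.2 rfl, Nat.zero_le n⟩)
    rw [hset, wordMass_singleton_nil, ENNReal.toReal_one]
  · have hset : {m ∈ walksThrough {w | w.2 < x.2} {x} z | m.length ≤ n} = ∅ := by
      refine Set.eq_empty_of_forall_notMem fun m hm => ?_
      obtain rfl : m = [] := hnil hm.1
      obtain rfl : z = x := Set.mem_singleton_iff.1 (nil_mem_walksThrough.1 hm.1)
      exact hzx (sub_self _)
    rw [hset, wordMass_empty, ENNReal.toReal_zero]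

lemma toReal_wordMass_halfPlane (n : ℕ) (hj : z.2 + j = x.2) :
    (wordMass {m ∈ walksThrough {w | w.2 < x.2} {x} z | m.length ≤ n}).toReal =
      poissonIntegral n (z.1 - x.1) j := by
  induction n generalizing z j with
  | zero =>
    rcases j with _ | j
    · exact toReal_wordMass_halfPlane_of_boundary 0 (by simpa using hj)
    have hset : {m ∈ walksThrough {w | w.2 < x.2} {x} z | m.length ≤ 0} = ∅ := by
      refine Set.eq_empty_of_forall_notMem fun m hm => ?_
      obtain rfl : m = [] := List.length_eq_zero_iff.1 (Nat.le_zero.1 hm.2)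
      obtain rfl : z = x := Set.mem_singleton_iff.1 (nil_mem_walksThrough.1 hm.1)
      omega
    rw [hset, wordMass_empty, ENNReal.toReal_zero, poissonIntegral_zero_succ]
  | succ n ih =>
    rcases j with _ | j
    · exact toReal_wordMass_halfPlane_of_boundary (n + 1) (by simpa using hj)
    push_cast at hj
    have hfin : ∀ w, wordMass {m ∈ walksThrough {w | w.2 < x.2} {x} w | m.length ≤ n} ≠ ⊤ :=
      fun w => ne_top_of_le_ne_top ENNReal.one_ne_top <| (wordMass_mono fun m hm => hm.1).trans
        (prefixFree_walksThrough (by simp) w).wordMass_le_one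
    have hzx : z ≠ x := by
      rintro rfl
      omega
    rw [wordMass_walksThrough_length_le_succ (by rw [Set.mem_ofPred_eq]; omega)
        (Set.mem_singleton_iff.not.2 hzx),
      ENNReal.toReal_mul, ENNReal.toReal_sum fun d _ => hfin _, Fin.sum_univ_four,
      ih (z := z + vec 0) (j := j + 1) (by simp [vec]; omega),
      ih (z := z + vec 1) (j := j) (by simp [vec]; omega),
      ih (z := z + vec 2) (j := j + 1) (by simp [vec]; omega),
      ih (z := z + vec 3) (j := j + 2) (by simp [vec]; omega), poissonIntegral_succ_succ]
    simp [vec, add_sub_right_comm, sub_right_comm, ← sub_eq_add_neg]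

lemma wordMass_halfPlane_le (hj : 0 < j) (hz : z.2 + j = x.2) :
    wordMass (walksThrough {w | w.2 < x.2} {x} z) ≤ ENNReal.ofReal (2 / j) := by
  refine wordMass_le_of_forall_length_le fun n => ?_
  rw [← ENNReal.ofReal_toReal (a := wordMass _), toReal_wordMass_halfPlane n hz]
  · exact ENNReal.ofReal_le_ofReal (poissonIntegral_le n _ hj)
  · exact ne_top_of_le_ne_top ENNReal.one_ne_top <| (wordMass_mono fun m hm => hm.1).trans
      (prefixFree_walksThrough (by simp) z).wordMass_le_one

lemma exists_rot_snd_eq_linf (x : Lat) : ∃ k, (rot k x).2 = linf x := by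
  rcases le_linf.1 (le_refl (linf x)) with h | h | h | h <;>
    have hle := linf_le.1 (le_refl (linf x))
  · exact ⟨1, by rw [rot_one_apply]; omega⟩
  · exact ⟨3, by rw [rot_three_apply]; omega⟩
  · exact ⟨0, by rw [rot_zero_apply]; omega⟩
  · exact ⟨2, by rw [rot_two_apply]; omega⟩

lemma wordMass_walksThrough_linf_lt_le (hzx : linf z < linf x) :
    wordMass (walksThrough {w | linf w < linf x} {x} z) ≤
      ENNReal.ofReal (2 / (linf x - linf z : ℤ)) := by
  obtain ⟨k, hk⟩ := exists_rot_snd_eq_linf x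
  have hz := linf_le.1 (linf_rot k z).le
  have hsub : walksThrough {w | linf w < linf x} {x} z ⊆
      List.map (rotDir k) ⁻¹' walksThrough {w | w.2 < (rot k x).2} {rot k x} (rot k z) := by
    intro m hm
    refine map_mem_walksThrough (vec_rotDir k) (fun w hw => ?_) (by simp) hm
    rw [Set.mem_ofPred_eq, hk]
    exact (linf_le.1 (linf_rot k w).le).2.2.1.trans_lt hw
  refine (wordMass_mono hsub).trans ?_
  rw [wordMass_preimage_map]
  have hdepth : ((linf x - (rot k z).2).toNat : ℤ) = linf x - (rot k z).2 :=
    Int.toNat_of_nonneg (by omega)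
  refine (wordMass_halfPlane_le (j := (linf x - (rot k z).2).toNat) (by omega) (by omega)).trans ?_
  refine ENNReal.ofReal_le_ofReal (div_le_div_of_nonneg_left two_pos.le ?_ ?_)
  · exact Int.cast_pos.2 (by omega)
  · rw [← Int.cast_natCast, hdepth, Int.cast_le]
    omega

end PoissonKernel

/-! ### Excursions without circuit -/

section Excursions

variable {r s : ℤ} {x y z : Lat} {p : ℝ≥0∞}

lemma exists_prefix_mem_walksThrough {G E : Set Lat} (hGE : Gᶜ ⊆ E) {m : List Dir} {z : Lat}
    (hm : z + disp m ∈ E) : ∃ a ∈ walksThrough G E z, a <+: m := by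
  induction m generalizing z with
  | nil => exact ⟨[], nil_mem_walksThrough.2 (by simpa using hm), List.prefix_rfl⟩
  | cons d m ih =>
    by_cases hz : z ∈ G
    · obtain ⟨a, ha, ham⟩ := ih (z := z + vec d) (by simpa [add_assoc] using hm)
      exact ⟨d :: a, (cons_mem_walksThrough hz).2 ha, by simpa using ham⟩
    · exact ⟨[], nil_mem_walksThrough.2 (hGE hz), List.nil_prefix⟩

/-- The walks from `z` stopped at their first visit to the box `B_r`. -/
def walksToInner (r : ℤ) (z : Lat) : Set (List Dir) :=
  walksThrough {w | r < linf w} {w | linf w ≤ r} z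

/-- The walks from `z` stopped when they first leave the interior of the box `B_s`. -/
def walksToOuter (s : ℤ) (z : Lat) : Set (List Dir) :=
  walksThrough {w | linf w < s} {w | s ≤ linf w} z

lemma prefixFree_walksToInner (r : ℤ) (z : Lat) : PrefixFree (walksToInner r z) :=
  prefixFree_walksThrough (by simp [Set.disjoint_left]) z

lemma prefixFree_walksToOuter (s : ℤ) (z : Lat) : PrefixFree (walksToOuter s z) :=
  prefixFree_walksThrough (by simp [Set.disjoint_left]) z

lemma exists_prefix_mem_walksToInner {m : List Dir} (hm : linf (z + disp m) ≤ r) :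
    ∃ a ∈ walksToInner r z, a <+: m :=
  exists_prefix_mem_walksThrough (by simp [Set.subset_def]) hm

lemma exists_prefix_mem_walksToOuter {m : List Dir} (hm : s ≤ linf (z + disp m)) :
    ∃ a ∈ walksToOuter s z, a <+: m :=
  exists_prefix_mem_walksThrough (by simp [Set.subset_def]) hm

lemma linf_add_vec_le (z : Lat) (d : Dir) : linf (z + vec d) ≤ linf z + 1 := by
  have h := linf_le.1 (le_refl (linf z))
  rw [linf_le]
  rcases vec_cases d with hd | hd | hd | hd <;> rw [hd] <;> simp <;> omega

lemma linf_end_of_mem_walksToOuter (hz : linf z < s) {b : List Dir} (hb : b ∈ walksToOuter s z) :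
    linf (z + disp b) = s := by
  refine le_antisymm ?_ hb.1
  rcases List.eq_nil_or_concat' b with rfl | ⟨u, d, rfl⟩
  · simpa using hz.le
  · have hu : linf (z + disp u) < s := hb.2 u (List.prefix_append u [d]) (by simp)
    have hstep := linf_add_vec_le (z + disp u) d
    simp only [disp_append, disp_cons, disp_nil, add_zero, ← add_assoc]
    omega

/-- The excursions from `x` to the box `B_r` and back to the boundary of `B_s` which make no circuit
around the annulus. -/
def excursions (r s : ℤ) (x : Lat) : Set (List Dir) :=
  {m ∈ concatSet (walksToInner r x) fun a => walksToOuter s (x + disp a) | ¬HasCircuit r s x m}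

lemma linf_end_of_mem_excursions (hrs : r < s) {m : List Dir} (hm : m ∈ excursions r s x) :
    linf (x + disp m) = s := by
  obtain ⟨⟨a, ha, b, hb, rfl⟩, -⟩ := hm
  simpa [add_assoc] using linf_end_of_mem_walksToOuter (lt_of_le_of_lt ha.1 hrs) hb

lemma prefixFree_excursions : PrefixFree (excursions r s x) := fun a ha b hb =>
  (prefixFree_walksToInner r x).concat (fun _ _ => prefixFree_walksToOuter s _) a ha.1 b hb.1

/-- Excursions and circuits avoiding `B_r` form together a prefix-free family, hence compete for the
total mass one. -/
lemma wordMass_excursions_le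
    (hp : Reach (fun m => VisitsOnly {w | r < linf w} x m ∧ HasCircuit r s x m) p) :
    wordMass (excursions r s x) ≤ 1 - p := by
  obtain ⟨G, hG, hpG, hcircuit⟩ := hp
  have hnot_prefix : ∀ e ∈ excursions r s x, ∀ g ∈ G, ¬e <+: g := by
    rintro _ ⟨⟨a, ha, b, -, rfl⟩, -⟩ g hg h
    have hin : linf (x + disp a) ≤ r := ha.1
    exact hin.not_gt ((hcircuit g hg).1 a ((List.prefix_append a b).trans h))
  have hnot_prefix' : ∀ e ∈ excursions r s x, ∀ g ∈ G, ¬g <+: e := by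
    rintro e ⟨-, he⟩ g hg ⟨b, rfl⟩
    exact he fun k => ((hcircuit g hg).2 k).append_right b
  have hunion : PrefixFree (excursions r s x ∪ G) := by
    rintro a (ha | ha) b (hb | hb) hab
    · exact prefixFree_excursions a ha b hb hab
    · exact absurd hab (hnot_prefix a ha b hb)
    · exact absurd hab (hnot_prefix' b hb a ha)
    · exact hG a ha b hb hab
  have hdisj : Disjoint (excursions r s x) G :=
    Set.disjoint_left.2 fun a ha hb => hnot_prefix a ha a hb List.prefix_rfl
  have hsum := hunion.wordMass_le_one
  rw [wordMass_union_of_disjoint hdisj] at hsum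
  exact ENNReal.le_sub_of_add_le_right
    (ne_top_of_le_ne_top ENNReal.one_ne_top (hpG.trans hG.wordMass_le_one))
    ((add_le_add_right hpG _).trans hsum)

/-- The concatenations of `j + 1` excursions leading from `x` to `y`. -/
def excursionChains (r s : ℤ) : ℕ → Lat → Lat → Set (List Dir)
  | 0, x, y => {m ∈ excursions r s x | x + disp m = y}
  | j + 1, x, y => concatSet (excursions r s x) fun e => excursionChains r s j (x + disp e) y

lemma wordMass_excursions_to_le (hrs : r < s) (hy : linf y = s) :
    wordMass {m ∈ excursions r s x | x + disp m = y} ≤ ENNReal.ofReal (2 / (s - r : ℤ)) := by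
  have hsub : {m ∈ excursions r s x | x + disp m = y} ⊆
      concatSet (walksToInner r x) fun a =>
        walksThrough {w | linf w < linf y} {y} (x + disp a) := by
    rintro _ ⟨⟨⟨a, ha, b, hb, rfl⟩, -⟩, h⟩
    refine ⟨a, ha, b, ⟨by simpa [add_assoc] using h, ?_⟩, rfl⟩
    rw [hy]
    exact hb.2
  have hreturn : ∀ a ∈ walksToInner r x, wordMass (walksThrough {w | linf w < linf y} {y}
      (x + disp a)) ≤ ENNReal.ofReal (2 / (s - r : ℤ)) := by
    intro a ha
    have hin : linf (x + disp a) ≤ r := ha.1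
    refine (wordMass_walksThrough_linf_lt_le (by omega)).trans (ENNReal.ofReal_le_ofReal ?_)
    refine div_le_div_of_nonneg_left two_pos.le (Int.cast_pos.2 (by omega)) (Int.cast_le.2 ?_)
    omega
  calc wordMass {m ∈ excursions r s x | x + disp m = y}
      ≤ wordMass (walksToInner r x) * ENNReal.ofReal (2 / (s - r : ℤ)) :=
        (wordMass_mono hsub).trans (wordMass_concatSet_le hreturn)
    _ ≤ 1 * ENNReal.ofReal (2 / (s - r : ℤ)) := by
        gcongr
        exact (prefixFree_walksToInner r x).wordMass_le_one
    _ = _ := one_mul _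

lemma wordMass_excursionChains_le (hrs : r < s)
    (hp : ∀ x, linf x = s →
      Reach (fun m => VisitsOnly {w | r < linf w} x m ∧ HasCircuit r s x m) p)
    (j : ℕ) (hx : linf x = s) (hy : linf y = s) :
    wordMass (excursionChains r s j x y) ≤ (1 - p) ^ j * ENNReal.ofReal (2 / (s - r : ℤ)) := by
  induction j generalizing x with
  | zero =>
    rw [pow_zero, one_mul]
    exact wordMass_excursions_to_le hrs hy
  | succ j ih =>
    rw [pow_succ', mul_assoc]
    refine (wordMass_concatSet_le fun e he => ih (linf_end_of_mem_excursions hrs he)).trans ?_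
    gcongr
    exact wordMass_excursions_le (hp x hx)

lemma wordMass_iUnion_excursionChains_le (hrs : r < s) (hp1 : p ≤ 1)
    (hp : ∀ x, linf x = s →
      Reach (fun m => VisitsOnly {w | r < linf w} x m ∧ HasCircuit r s x m) p)
    (hx : linf x = s) :
    wordMass (⋃ j, excursionChains r s j x x) ≤ p⁻¹ * ENNReal.ofReal (2 / (s - r : ℤ)) :=
  calc wordMass (⋃ j, excursionChains r s j x x)
      ≤ ∑' j, wordMass (excursionChains r s j x x) := wordMass_iUnion_le _
    _ ≤ ∑' j, (1 - p) ^ j * ENNReal.ofReal (2 / (s - r : ℤ)) :=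
        ENNReal.tsum_le_tsum fun j => wordMass_excursionChains_le hrs hp j hx hx
    _ = p⁻¹ * ENNReal.ofReal (2 / (s - r : ℤ)) := by
        rw [ENNReal.tsum_mul_right, ENNReal.tsum_geometric,
          ENNReal.sub_sub_cancel ENNReal.one_ne_top hp1]

/-- No part of the walk `m` from `x` is a circuit around the annulus. -/
def CircuitFree (r s : ℤ) (x : Lat) (m : List Dir) : Prop :=
  ∀ a e b, m = a ++ e ++ b → ¬HasCircuit r s (x + disp a) e

lemma CircuitFree.of_append {a b : List Dir} (h : CircuitFree r s x (a ++ b)) :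
    CircuitFree r s (x + disp a) b := by
  rintro a' e b' rfl
  simpa [add_assoc] using h (a ++ a') e b' (by simp)

lemma CircuitFree.exists_prefix_mem_excursions {m u : List Dir} (hm : CircuitFree r s x m)
    (hum : u <+: m) (hu : linf (x + disp u) ≤ r) (hend : s ≤ linf (x + disp m)) :
    ∃ e ∈ excursions r s x, e <+: m := by
  obtain ⟨a, ha, hau⟩ := exists_prefix_mem_walksToInner hu
  obtain ⟨m', rfl⟩ := hau.trans hum
  obtain ⟨b, hb, m'', rfl⟩ := exists_prefix_mem_walksToOuter (z := x + disp a) (m := m')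
    (by simpa [add_assoc] using hend)
  refine ⟨a ++ b, ⟨⟨a, ha, b, hb, rfl⟩, ?_⟩, by simp⟩
  simpa using hm [] (a ++ b) m'' (by simp)

lemma CircuitFree.exists_mem_excursionChains (hrs : r < s) {u v : List Dir}
    (hm : CircuitFree r s x (u ++ v)) (hx : linf x = s) (hu : linf (x + disp u) ≤ r)
    (hv : v ∈ walksToOuter s (x + disp u)) :
    ∃ j, u ++ v ∈ excursionChains r s j x (x + disp (u ++ v)) := by
  induction hn : u.length using Nat.strong_induction_on generalizing u x with
  | _ n ih =>
  obtain ⟨e, he, hem⟩ := hm.exists_prefix_mem_excursions (List.prefix_append u v) hu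
    (by simpa [← add_assoc] using hv.1)
  have hxe := linf_end_of_mem_excursions hrs he
  rcases List.prefix_or_prefix_of_prefix hem (List.prefix_append u v) with ⟨u, rfl⟩ | ⟨v', rfl⟩
  · have hne : 0 < e.length := by
      refine List.length_pos_iff.2 fun h => ?_
      obtain ⟨⟨a, ha, b, -, rfl⟩, -⟩ := he
      obtain ⟨rfl, rfl⟩ := List.append_eq_nil_iff.1 h
      have hin : linf (x + disp []) ≤ r := ha.1
      simp only [disp_nil, add_zero] at hin
      omega
    rw [List.append_assoc] at hm ⊢
    obtain ⟨j, hj⟩ := ih u.length (by simp only [← hn, List.length_append]; omega)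
      hm.of_append hxe (by simpa [add_assoc] using hu) (by simpa [add_assoc] using hv) rfl
    exact ⟨j + 1, e, he, u ++ v, by simpa [add_assoc] using hj, rfl⟩
  · obtain rfl : v' = v := by
      by_contra hne
      have hlt : linf (x + disp u + disp v') < s :=
        hv.2 v' ((List.prefix_append_right_inj u).1 hem) hne
      rw [add_assoc, ← disp_append] at hlt
      exact hlt.ne hxe
    exact ⟨0, he, rfl⟩

end Excursions

/-! ### Loops as closed walks -/

section Loops

lemma Adj.exists_vec_eq {a b : Lat} (h : Adj a b) : ∃ d, vec d = b - a := by
  have hsq : (b - a).1 ^ 2 + (b - a).2 ^ 2 = 1 := by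
    rw [← h, Prod.fst_sub, Prod.snd_sub]
    ring
  generalize b - a = c at hsq
  obtain ⟨x, y⟩ := c
  simp only at hsq
  obtain ⟨hx, hx'⟩ : -1 ≤ x ∧ x ≤ 1 := by constructor <;> nlinarith
  obtain ⟨hy, hy'⟩ : -1 ≤ y ∧ y ≤ 1 := by constructor <;> nlinarith
  interval_cases x <;> interval_cases y <;> first | decide | simp at hsq

namespace RootedLoop

variable (L : RootedLoop)

lemma length_word_pos : 0 < L.word.length := List.length_pos_iff.2 L.ne

/-- The vertex visited at time `i`, the loop being run through periodically. -/
def vertex (i : ℕ) : Lat := L.word[i % L.word.length]'(Nat.mod_lt _ L.length_word_pos)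

lemma vertex_mod (i : ℕ) : L.vertex (i % L.word.length) = L.vertex i := by simp [vertex]

lemma vertex_add_length (i : ℕ) : L.vertex (i + L.word.length) = L.vertex i := by simp [vertex]

lemma vertex_mod_add_one (i : ℕ) : L.vertex (i % L.word.length + 1) = L.vertex (i + 1) := by
  simp [vertex, Nat.add_mod]

lemma length_closure : (L.word ++ L.word.take 1).length = L.word.length + 1 := by
  have := L.length_word_pos
  simp
  omega

lemma getElem_closure {i : ℕ} (hi : i ≤ L.word.length) :
    (L.word ++ L.word.take 1)[i]'(by rw [length_closure]; omega) = L.vertex i := by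
  rcases hi.lt_or_eq with hlt | rfl
  · simp [List.getElem_append_left hlt, vertex, Nat.mod_eq_of_lt hlt]
  · simp [vertex]

lemma adj_vertex (i : ℕ) : Adj (L.vertex i) (L.vertex (i + 1)) := by
  have hi := Nat.mod_lt i L.length_word_pos
  have h := List.isChain_iff_getElem.1 L.adj (i % L.word.length) (by rw [length_closure]; omega)
  rwa [L.getElem_closure hi.le, L.getElem_closure hi, vertex_mod, vertex_mod_add_one] at h

lemma segment_vertex_subset (i : ℕ) : segment ℝ (emb (L.vertex i)) (emb (L.vertex (i + 1))) ⊆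
    traceL (L.word ++ L.word.take 1) := by
  have hi := Nat.mod_lt i L.length_word_pos
  refine fun p hp => Or.inr (Set.mem_iUnion₂.2 ⟨(L.vertex i, L.vertex (i + 1)), ?_, hp⟩)
  refine List.mem_iff_getElem.2 ⟨i % L.word.length, ?_, ?_⟩
  · rw [List.length_zip, List.length_tail, length_closure]
    omega
  · rw [List.getElem_zip, List.getElem_tail, L.getElem_closure hi.le, L.getElem_closure hi,
      vertex_mod, vertex_mod_add_one]

lemma rotate_word (i : ℕ) :
    L.word.rotate i = (List.range L.word.length).map fun t => L.vertex (i + t) := by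
  refine List.ext_getElem (by simp) fun t _ _ => ?_
  simp [List.getElem_rotate, vertex, add_comm]

lemma exists_vertex_add_eq {z : Lat} (hz : z ∈ L.word) (i : ℕ) :
    ∃ k < L.word.length, L.vertex (i + k) = z := by
  rw [← List.mem_rotate (n := i), rotate_word] at hz
  simpa using hz

/-- The direction of the step made at time `i`. -/
def step (i : ℕ) : Dir := Function.invFun vec (L.vertex (i + 1) - L.vertex i)

lemma vertex_add_step (i : ℕ) : L.vertex i + vec (L.step i) = L.vertex (i + 1) := by
  rw [step, Function.invFun_eq (L.adj_vertex i).exists_vec_eq, add_sub_cancel]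

lemma step_add_length (i : ℕ) : L.step (i + L.word.length) = L.step i := by
  rw [step, add_right_comm, vertex_add_length, vertex_add_length, step]

/-- The walk described by the loop between the times `i` and `i + k`. -/
def stretch (i k : ℕ) : List Dir := (List.range k).map fun t => L.step (i + t)

variable {L}

@[simp] lemma length_stretch (i k : ℕ) : (L.stretch i k).length = k := by simp [stretch]

lemma stretch_add (i k k' : ℕ) :
    L.stretch i (k + k') = L.stretch i k ++ L.stretch (i + k) k' := by
  simp [stretch, List.range_add, Function.comp_def, add_assoc]

lemma stretch_add_length (i k : ℕ) : L.stretch (i + L.word.length) k = L.stretch i k := by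
  refine List.map_congr_left fun t _ => ?_
  rw [add_right_comm, step_add_length]

lemma vertex_add_disp_stretch (i k : ℕ) :
    L.vertex i + disp (L.stretch i k) = L.vertex (i + k) := by
  induction k with
  | zero => simp [stretch]
  | succ k ih =>
    rw [stretch_add, disp_append, ← add_assoc, ih, ← add_assoc, ← vertex_add_step]
    simp [stretch]

lemma eq_stretch_of_prefix {i k : ℕ} {u : List Dir} (h : u <+: L.stretch i k) :
    u = L.stretch i u.length := by
  obtain ⟨t, ht⟩ := Nat.exists_eq_add_of_le h.length_le
  rw [length_stretch] at ht
  rw [ht, stretch_add] at h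
  exact (List.prefix_of_prefix_length_le h (List.prefix_append _ _) (by simp)).eq_of_length
    (by simp)

lemma eq_stretch_of_infix {i k : ℕ} {a e b : List Dir} (h : L.stretch i k = a ++ e ++ b) :
    e = L.stretch (i + a.length) e.length := by
  have hae := eq_stretch_of_prefix (L := L) (i := i) (k := k) ⟨b, h.symm⟩
  rw [List.length_append, stretch_add] at hae
  exact (List.append_inj hae (by simp)).2

lemma stretch_reroot {i k : ℕ} (hk : k ≤ L.word.length) :
    L.stretch (i + k) L.word.length =
      L.stretch (i + k) (L.word.length - k) ++ L.stretch i k := by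
  obtain ⟨t, ht⟩ := Nat.exists_eq_add_of_le hk
  conv_lhs => rw [ht, add_comm k t, stretch_add]
  rw [add_assoc, ← ht, stretch_add_length, show L.word.length - k = t by omega]

end RootedLoop

lemma ULoop.eq_of_stretch_eq {γ γ' : ULoop} {i i' : ℕ}
    (hvertex : γ.out.vertex i = γ'.out.vertex i')
    (h : γ.out.stretch i γ.out.word.length = γ'.out.stretch i' γ'.out.word.length) : γ = γ' := by
  have hlen : γ.out.word.length = γ'.out.word.length := by simpa using congrArg List.length h
  have hrot : γ.out.word.rotate i = γ'.out.word.rotate i' := by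
    rw [RootedLoop.rotate_word, RootedLoop.rotate_word, ← hlen]
    refine List.map_congr_left fun t ht => ?_
    obtain ⟨t', ht'⟩ := Nat.exists_eq_add_of_le (List.mem_range.1 ht).le
    rw [← hlen, ht', RootedLoop.stretch_add, RootedLoop.stretch_add] at h
    rw [← RootedLoop.vertex_add_disp_stretch, ← RootedLoop.vertex_add_disp_stretch, hvertex,
      (List.append_inj h (by simp)).1]
  obtain ⟨k, hk⟩ : γ.out.word ~r γ'.out.word :=
    List.IsRotated.trans ⟨i, hrot⟩ (List.IsRotated.symm ⟨i', rfl⟩)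
  rw [← Quot.out_eq γ, ← Quot.out_eq γ']
  exact Quot.sound ⟨k, hk.symm⟩

lemma loopWeight_le (γ : ULoop) : (loopWeight γ : ℝ≥0∞) ≤ 4⁻¹ ^ γ.out.word.length := by
  have h : loopWeight γ ≤ 4⁻¹ ^ γ.out.word.length := by
    rw [loopWeight]
    rcases Nat.eq_zero_or_pos γ.mult with h | h
    · simp [h]
    · exact div_le_self (by positivity) (by exact_mod_cast h)
  refine (ENNReal.coe_le_coe.2 h).trans ?_
  rw [ENNReal.coe_pow, ENNReal.coe_inv (by norm_num)]
  rfl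

/-- The masses add up because a loop is determined by any of its rooted versions. -/
lemma nuMass_le_sum_wordMass {S : Set ULoop} (T : Finset Lat) (M : Lat → Set (List Dir))
    (h : ∀ γ ∈ S, ∃ i, γ.out.vertex i ∈ T ∧
      γ.out.stretch i γ.out.word.length ∈ M (γ.out.vertex i)) :
    nuMass S ≤ ∑ x ∈ T, wordMass (M x) := by
  choose! i hT hM using h
  let code : S → Σ x : T, M x := fun γ => ⟨⟨_, hT γ.1 γ.2⟩, ⟨_, hM γ.1 γ.2⟩⟩
  have hcode : Function.Injective code := by
    intro γ γ' h
    have hvertex : (code γ).1.1 = (code γ').1.1 := by rw [h]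
    have hstretch : (code γ).2.1 = (code γ').2.1 := by rw [h]
    exact Subtype.ext (ULoop.eq_of_stretch_eq hvertex hstretch)
  calc nuMass S
      ≤ ∑' γ : S, (4 : ℝ≥0∞)⁻¹ ^ (code γ).2.1.length :=
        ENNReal.tsum_le_tsum fun γ => by simpa [code] using loopWeight_le γ.1
    _ ≤ ∑' m : Σ x : T, M x, (4 : ℝ≥0∞)⁻¹ ^ m.2.1.length :=
        ENNReal.tsum_comp_le_tsum_of_injective hcode
          (fun m : Σ x : T, M x => (4 : ℝ≥0∞)⁻¹ ^ m.2.1.length)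
    _ = ∑ x ∈ T, wordMass (M x) := by
        rw [ENNReal.tsum_sigma', tsum_fintype, ← Finset.sum_coe_sort T fun x => wordMass (M x)]
        simp [wordMass]

end Loops

/-! ### The mass of the loops without circuit -/

section LoopMass

variable {r s l : ℤ} {N : ℕ}

/-- For each of the four quarter turns of the annulus `A_{r,s}`, the plane set `A` contains the
trace of a walk which crosses the top side of the annulus after that turn; the four crossings
together separate the two boundary components of the annulus. -/
def ContainsCircuit (r s : ℤ) (A : Set Plane) : Prop :=
  ∀ k : Dir, ∃ (z : Lat) (v : List Dir), CrossesTop r s (rot k z) (v.map (rotDir k)) ∧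
    ∀ (u : List Dir) (d : Dir), u ++ [d] <+: v →
      segment ℝ (emb (z + disp u)) (emb (z + disp (u ++ [d]))) ⊆ A

/-- The loops which visit both `∂B_r` and `∂B_s` and contain no circuit around `A_{r,s}`. -/
def circuitFreeCrossings (r s : ℤ) : Set ULoop :=
  {γ | (∃ z ∈ γ.verts, linf z = r) ∧ (∃ z ∈ γ.verts, linf z = s) ∧
    ¬ContainsCircuit r s γ.trace}

lemma RootedLoop.containsCircuit_trace (L : RootedLoop) {i k : ℕ}
    (h : HasCircuit r s (L.vertex i) (L.stretch i k)) :
    ContainsCircuit r s (traceL (L.word ++ L.word.take 1)) := by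
  intro q
  obtain ⟨u, v, w, hsplit, hcross⟩ := h q
  refine ⟨_, v, hcross, fun u' d hd => ?_⟩
  have hu := eq_stretch_of_prefix (L := L) (u := u) (i := i) (k := k)
    ⟨v ++ w, by rw [hsplit, List.append_assoc]⟩
  rw [eq_stretch_of_infix hsplit] at hd
  rw [eq_stretch_of_prefix hd, eq_stretch_of_prefix ((List.prefix_append u' [d]).trans hd), hu]
  simp only [vertex_add_disp_stretch, length_stretch, List.length_append, List.length_singleton,
    ← add_assoc]
  exact L.segment_vertex_subset _

lemma RootedLoop.circuitFree_stretch {L : RootedLoop}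
    (h : ¬ContainsCircuit r s (traceL (L.word ++ L.word.take 1))) (i k : ℕ) :
    CircuitFree r s (L.vertex i) (L.stretch i k) := by
  intro a e b hab hcircuit
  have ha := eq_stretch_of_prefix (L := L) (u := a) (i := i) (k := k)
    ⟨e ++ b, by rw [hab, List.append_assoc]⟩
  rw [eq_stretch_of_infix hab, ha, vertex_add_disp_stretch, length_stretch] at hcircuit
  exact h (L.containsCircuit_trace hcircuit)

lemma RootedLoop.exists_stretch_mem_walksToOuter (L : RootedLoop) {z w : Lat} (hz : z ∈ L.word)
    (hw : w ∈ L.word) (hws : s ≤ linf w) :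
    ∃ i, ∃ k ≤ L.word.length, L.vertex i = z ∧ L.stretch i k ∈ walksToOuter s z := by
  obtain ⟨i, -, hi⟩ := L.exists_vertex_add_eq hz 0
  rw [zero_add] at hi
  obtain ⟨t, ht, htw⟩ := L.exists_vertex_add_eq hw i
  obtain ⟨a, ha, hat⟩ := exists_prefix_mem_walksToOuter (s := s) (z := z) (m := L.stretch i t)
    (by rwa [← hi, vertex_add_disp_stretch, htw])
  refine ⟨i, a.length, ?_, hi, eq_stretch_of_prefix hat ▸ ha⟩
  exact (hat.length_le.trans (by simp)).trans ht.le

lemma exists_stretch_mem_excursionChains (hrs : r < s) {γ : ULoop}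
    (hγ : γ ∈ circuitFreeCrossings r s) :
    ∃ i, linf (γ.out.vertex i) = s ∧ γ.out.stretch i γ.out.word.length ∈
      ⋃ j, excursionChains r s j (γ.out.vertex i) (γ.out.vertex i) := by
  obtain ⟨⟨z, hz, hzr⟩, ⟨w, hw, hws⟩, hfree⟩ := hγ
  obtain ⟨i, k, hk, rfl, hout⟩ := γ.out.exists_stretch_mem_walksToOuter hz hw hws.ge
  have hs := linf_end_of_mem_walksToOuter (hzr.trans_lt hrs) hout
  rw [RootedLoop.vertex_add_disp_stretch] at hs
  have hback : γ.out.vertex (i + k) +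
      disp (γ.out.stretch (i + k) (γ.out.word.length - k)) = γ.out.vertex i := by
    rw [RootedLoop.vertex_add_disp_stretch, show i + k + (γ.out.word.length - k) =
      i + γ.out.word.length by omega, RootedLoop.vertex_add_length]
  have hfree := RootedLoop.circuitFree_stretch hfree (i + k) γ.out.word.length
  rw [RootedLoop.stretch_reroot hk] at hfree
  obtain ⟨j, hj⟩ := hfree.exists_mem_excursionChains hrs hs (hback.symm ▸ hzr.le)
    (hback.symm ▸ hout)
  rw [← RootedLoop.stretch_reroot hk, RootedLoop.vertex_add_disp_stretch,
    RootedLoop.vertex_add_length] at hj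
  exact ⟨i + k, hs, Set.mem_iUnion.2 ⟨j, hj⟩⟩

lemma mem_box_iff_linf_eq {n : ℕ} {x : Lat} : x ∈ Finset.box n ↔ linf x = n := by
  rw [Int.mem_box, linf, ← Int.natCast_natAbs, ← Int.natCast_natAbs]
  omega

lemma BandScale.outer_div_le (h : BandScale r s l N) : (s : ℝ) / (s - r : ℤ) ≤ N := by
  have hlt := h.inner_lt_outer
  have hwidth := h.width_le
  have hle : s ≤ N * (s - r) :=
    h.outer_le.trans (mul_le_mul_of_nonneg_left (by omega) (by positivity))
  exact (div_le_iff₀ (Int.cast_pos.2 (by omega))).2 (by exact_mod_cast hle)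

lemma BandScale.nuMass_circuitFreeCrossings_le (h : BandScale r s l N) :
    nuMass (circuitFreeCrossings r s) ≤ ENNReal.ofReal (16 * N * 8 ^ (80 * N)) := by
  have hlt := h.inner_lt_outer
  have hs : 0 < s := by have := h.one_le_inner; omega
  lift s to ℕ using hs.le
  have hroot : ∀ γ ∈ circuitFreeCrossings r s, ∃ i, γ.out.vertex i ∈ Finset.box s ∧
      γ.out.stretch i γ.out.word.length ∈
        ⋃ j, excursionChains r s j (γ.out.vertex i) (γ.out.vertex i) := by
    simp only [mem_box_iff_linf_eq]
    exact fun γ hγ => exists_stretch_mem_excursionChains hlt hγ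
  calc nuMass (circuitFreeCrossings r s)
      ≤ ∑ x ∈ Finset.box s, wordMass (⋃ j, excursionChains r s j x x) :=
        nuMass_le_sum_wordMass _ _ hroot
    _ ≤ ∑ _x ∈ (Finset.box s : Finset Lat),
          ((8⁻¹ : ℝ≥0∞) ^ (80 * N))⁻¹ * ENNReal.ofReal (2 / (s - r : ℤ)) :=
        Finset.sum_le_sum fun _ hx => wordMass_iUnion_excursionChains_le hlt
          (pow_le_one' (by simp) _) (fun _ => h.reach_hasCircuit) (mem_box_iff_linf_eq.1 hx)
    _ = ENNReal.ofReal (8 * s * (8 ^ (80 * N) * (2 / (s - r : ℤ)))) := by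
        rw [Finset.sum_const, Int.card_box (by omega), nsmul_eq_mul,
          ENNReal.ofReal_mul (p := 8 * s) (by positivity),
          ENNReal.ofReal_mul (p := 8 ^ _) (by positivity), ENNReal.ofReal_pow (by norm_num),
          ENNReal.inv_pow, inv_inv, ENNReal.ofReal_mul (by norm_num)]
        simp
    _ = ENNReal.ofReal (16 * 8 ^ (80 * N) * (s / (s - r : ℤ))) := by
        congr 1
        ring
    _ ≤ ENNReal.ofReal (16 * 8 ^ (80 * N) * N) := by
        gcongr
        exact_mod_cast h.outer_div_le
    _ = ENNReal.ofReal (16 * N * 8 ^ (80 * N)) := by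
        congr 1
        ring

end LoopMass

/-! ### Crossing a polygonal line -/

section Crossing

/-- The angle swept around the point `p` by the polygonal line `a 0, …, a n`, each of its segments
contributing an angle in `(-π, π)`. -/
def polygonAngle (a : ℕ → ℂ) (n : ℕ) (p : ℂ) : ℝ :=
  ∑ i ∈ Finset.range n, ((a (i + 1) - p) / (a i - p)).arg

/-- The angle swept around the point `p` by the polygonal line `a 0, …, a n` prolonged by the
horizontal half-lines on the left of `a 0` and on the right of `a n`. -/
def prolongedPolygonAngle (a : ℕ → ℂ) (n : ℕ) (p : ℂ) : ℝ :=
  (p - a 0).arg + polygonAngle a n p - (a n - p).arg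

lemma sub_ne_zero_of_notMem_segment_left {a b p : ℂ} (h : p ∉ segment ℝ a b) : a - p ≠ 0 :=
  sub_ne_zero.2 fun hap => h (hap ▸ left_mem_segment ℝ a b)

lemma sub_ne_zero_of_notMem_segment_right {a b p : ℂ} (h : p ∉ segment ℝ a b) : b - p ≠ 0 :=
  sub_ne_zero.2 fun hbp => h (hbp ▸ right_mem_segment ℝ a b)

lemma div_sub_mem_slitPlane {a b p : ℂ} (h : p ∉ segment ℝ a b) :
    (b - p) / (a - p) ∈ Complex.slitPlane := by
  have hap := sub_ne_zero_of_notMem_segment_left h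
  refine Complex.mem_slitPlane_iff_not_le_zero.2 fun hle => h (mem_segment_iff_sameRay.2 ?_)
  obtain ⟨hre, him⟩ := Complex.nonpos_iff.1 hle
  have hreal : ((((b - p) / (a - p)).re : ℝ) : ℂ) = (b - p) / (a - p) := Complex.ext rfl him.symm
  have hb : b - p = (-((b - p) / (a - p)).re) • (p - a) := by
    rw [Complex.real_smul, Complex.ofReal_neg, hreal, neg_mul, ← mul_neg, neg_sub,
      div_mul_cancel₀ _ hap]
  rw [hb]
  exact SameRay.sameRay_nonneg_smul_right _ (neg_nonneg.2 hre)

lemma mem_slitPlane_of_re_nonneg {z : ℂ} (hre : 0 ≤ z.re) (hz : z ≠ 0) :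
    z ∈ Complex.slitPlane := by
  refine Complex.mem_slitPlane_iff.2 (hre.lt_or_eq.imp id fun hre' him => hz ?_)
  exact Complex.ext hre'.symm him

lemma arg_nonpos_of_re_nonneg {z : ℂ} (hre : 0 ≤ z.re) (him : z.im ≤ 0) : z.arg ≤ 0 := by
  rcases him.lt_or_eq with him | him
  · exact (Complex.arg_neg_iff.2 him).le
  · exact (Complex.arg_eq_zero_iff.2 ⟨hre, him⟩).le

/-- In a half-plane bounded by a line through `p`, angles around `p` add up without any
correction by multiples of `2π`. -/
lemma arg_div_eq_sub_of_re_nonneg {a b p c : ℂ} (hc : c ≠ 0) (h : p ∉ segment ℝ a b)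
    (ha : 0 ≤ (c * (a - p)).re) (hb : 0 ≤ (c * (b - p)).re) :
    ((b - p) / (a - p)).arg = (c * (b - p)).arg - (c * (a - p)).arg := by
  have hangle : (((b - p) / (a - p)).arg : Real.Angle) =
      ((c * (b - p)).arg - (c * (a - p)).arg : ℝ) := by
    rw [Real.Angle.coe_sub, ← Complex.arg_div_coe_angle
      (mul_ne_zero hc (sub_ne_zero_of_notMem_segment_right h))
      (mul_ne_zero hc (sub_ne_zero_of_notMem_segment_left h)), mul_div_mul_left _ _ hc]
  obtain ⟨k, hk⟩ := Real.Angle.angle_eq_iff_two_pi_dvd_sub.1 hangle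
  have ha' := abs_le.1 (Complex.abs_arg_le_pi_div_two_iff.2 ha)
  have hb' := abs_le.1 (Complex.abs_arg_le_pi_div_two_iff.2 hb)
  have hlt := Complex.neg_pi_lt_arg ((b - p) / (a - p))
  have hgt := (Complex.arg_le_pi ((b - p) / (a - p))).lt_of_ne
    (Complex.slitPlane_arg_ne_pi (div_sub_mem_slitPlane h))
  have hk1 : (k : ℝ) < 1 := by nlinarith [Real.pi_pos]
  have hk2 : (-1 : ℝ) < k := by nlinarith [Real.pi_pos]
  obtain rfl : k = 0 := by
    have : k < 1 := by exact_mod_cast hk1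
    have : -1 < k := by exact_mod_cast hk2
    omega
  simpa [sub_eq_zero] using hk

variable {a : ℕ → ℂ} {n : ℕ} {p : ℂ}

lemma sub_ne_zero_of_forall_notMem_segment (hn : n ≠ 0)
    (h : ∀ i < n, p ∉ segment ℝ (a i) (a (i + 1))) {i : ℕ} (hi : i ≤ n) : a i - p ≠ 0 := by
  rcases hi.lt_or_eq with hi | rfl
  · exact sub_ne_zero_of_notMem_segment_left (h i hi)
  · obtain ⟨m, rfl⟩ := Nat.exists_eq_succ_of_ne_zero hn
    exact sub_ne_zero_of_notMem_segment_right (h m m.lt_succ_self)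

lemma polygonAngle_eq_of_re_nonneg {c : ℂ} (hc : c ≠ 0)
    (h : ∀ i < n, p ∉ segment ℝ (a i) (a (i + 1)))
    (hre : ∀ i ≤ n, 0 ≤ (c * (a i - p)).re) :
    polygonAngle a n p = (c * (a n - p)).arg - (c * (a 0 - p)).arg := by
  rw [← Finset.sum_range_sub fun i => (c * (a i - p)).arg]
  refine Finset.sum_congr rfl fun i hi => ?_
  have hi := Finset.mem_range.1 hi
  exact arg_div_eq_sub_of_re_nonneg hc (h i hi) (hre i hi.le) (hre (i + 1) hi)

lemma coe_polygonAngle (h : ∀ i ≤ n, a i - p ≠ 0) :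
    (polygonAngle a n p : Real.Angle) = (a n - p).arg - (a 0 - p).arg := by
  rw [← Finset.sum_range_sub fun i => ((a i - p).arg : Real.Angle), polygonAngle,
    ← Real.Angle.coe_coeHom, map_sum]
  refine Finset.sum_congr rfl fun i hi => ?_
  have hi := Finset.mem_range.1 hi
  exact Complex.arg_div_coe_angle (h (i + 1) hi) (h i hi.le)

lemma prolongedPolygonAngle_ne_zero (h : ∀ i ≤ n, a i - p ≠ 0) :
    prolongedPolygonAngle a n p ≠ 0 := by
  have hpi : (prolongedPolygonAngle a n p : Real.Angle) = Real.pi := by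
    rw [prolongedPolygonAngle, Real.Angle.coe_sub, Real.Angle.coe_add, coe_polygonAngle h,
      ← neg_sub (a 0) p, Complex.arg_neg_coe_angle (h 0 n.zero_le)]
    abel
  intro hzero
  rw [hzero, Real.Angle.coe_zero] at hpi
  exact Real.Angle.pi_ne_zero hpi.symm

lemma prolongedPolygonAngle_nonpos (h : ∀ i < n, p ∉ segment ℝ (a i) (a (i + 1)))
    (hleft : (a 0).re ≤ p.re) (hright : p.re ≤ (a n).re) (habove : ∀ i ≤ n, p.im ≤ (a i).im) :
    prolongedPolygonAngle a n p ≤ 0 := by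
  have h0 := habove 0 n.zero_le
  have hn := habove n le_rfl
  have hturn := polygonAngle_eq_of_re_nonneg (c := -Complex.I) (by simp) h
    fun i hi => by simpa using habove i hi
  have h1 : (-Complex.I * (a n - p)).arg ≤ 0 :=
    arg_nonpos_of_re_nonneg (by simpa using hn) (by simpa using hright)
  have h2 : 0 ≤ (-Complex.I * (a 0 - p)).arg := Complex.arg_nonneg_iff.2 (by simpa using hleft)
  have h3 : 0 ≤ (a n - p).arg := Complex.arg_nonneg_iff.2 (by simpa using hn)
  have h4 : (p - a 0).arg ≤ 0 :=
    arg_nonpos_of_re_nonneg (by simpa using hleft) (by simpa using h0)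
  rw [prolongedPolygonAngle]
  linarith

lemma prolongedPolygonAngle_nonneg (h : ∀ i < n, p ∉ segment ℝ (a i) (a (i + 1)))
    (hleft : (a 0).re ≤ p.re) (hright : p.re ≤ (a n).re) (hbelow : ∀ i ≤ n, (a i).im ≤ p.im) :
    0 ≤ prolongedPolygonAngle a n p := by
  have h0 := hbelow 0 n.zero_le
  have hn := hbelow n le_rfl
  have hturn := polygonAngle_eq_of_re_nonneg (c := Complex.I) (by simp) h
    fun i hi => by simpa using hbelow i hi
  have h1 : 0 ≤ (Complex.I * (a n - p)).arg := Complex.arg_nonneg_iff.2 (by simpa using hright)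
  have h2 : (Complex.I * (a 0 - p)).arg ≤ 0 :=
    arg_nonpos_of_re_nonneg (by simpa using h0) (by simpa using hleft)
  have h3 : (a n - p).arg ≤ 0 :=
    arg_nonpos_of_re_nonneg (by simpa using hright) (by simpa using hn)
  have h4 : 0 ≤ (p - a 0).arg := Complex.arg_nonneg_iff.2 (by simpa using h0)
  rw [prolongedPolygonAngle]
  linarith

lemma continuousAt_prolongedPolygonAngle (hn : n ≠ 0)
    (h : ∀ i < n, p ∉ segment ℝ (a i) (a (i + 1)))
    (hleft : (a 0).re ≤ p.re) (hright : p.re ≤ (a n).re) :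
    ContinuousAt (prolongedPolygonAngle a n) p := by
  have hne : ∀ i ≤ n, a i - p ≠ 0 := fun i => sub_ne_zero_of_forall_notMem_segment hn h
  have hsub : ∀ i, ContinuousAt (fun q => a i - q) p := fun i => by fun_prop
  refine ContinuousAt.sub (ContinuousAt.add ?_ ?_) ?_
  · refine ContinuousAt.comp' (Complex.continuousAt_arg ?_) (by fun_prop)
    refine mem_slitPlane_of_re_nonneg (by simpa using hleft) ?_
    exact sub_ne_zero.2 (sub_ne_zero.1 (hne 0 n.zero_le)).symm
  · refine tendsto_finsetSum _ fun i hi => ?_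
    have hi := Finset.mem_range.1 hi
    exact ContinuousAt.comp' (Complex.continuousAt_arg (div_sub_mem_slitPlane (h i hi)))
      ((hsub (i + 1)).div (hsub i) (hne i hi.le))
  · refine ContinuousAt.comp' (Complex.continuousAt_arg ?_) (hsub n)
    exact mem_slitPlane_of_re_nonneg (by simpa using hright) (hne n le_rfl)

lemma exists_mem_segment_of_crosses (hn : n ≠ 0) {u v : ℝ} (huv : u ≤ v) {γ : ℝ → ℂ}
    (hγ : ContinuousOn γ (Icc u v)) (hleft : ∀ t ∈ Icc u v, (a 0).re ≤ (γ t).re)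
    (hright : ∀ t ∈ Icc u v, (γ t).re ≤ (a n).re) (habove : ∀ i ≤ n, (γ u).im ≤ (a i).im)
    (hbelow : ∀ i ≤ n, (a i).im ≤ (γ v).im) :
    ∃ t ∈ Icc u v, ∃ i < n, γ t ∈ segment ℝ (a i) (a (i + 1)) := by
  by_contra! h
  have hu := left_mem_Icc.2 huv
  have hv := right_mem_Icc.2 huv
  have hcont : ContinuousOn (fun t => prolongedPolygonAngle a n (γ t)) (Icc u v) := fun t ht =>
    (continuousAt_prolongedPolygonAngle hn (h t ht) (hleft t ht)
      (hright t ht)).comp_continuousWithinAt (hγ t ht)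
  obtain ⟨t, ht, hzero⟩ := intermediate_value_Icc huv hcont
    ⟨prolongedPolygonAngle_nonpos (h u hu) (hleft u hu) (hright u hu) habove,
      prolongedPolygonAngle_nonneg (h v hv) (hleft v hv) (hright v hv) hbelow⟩
  exact prolongedPolygonAngle_ne_zero
    (fun i => sub_ne_zero_of_forall_notMem_segment hn (h t ht)) hzero

end Crossing

/-! ### Circuits disconnect -/

section Disconnection

/-- The identification of the plane with `ℂ`, followed by `k` quarter turns. -/
def quarterTurn (k : Dir) : Plane ≃ₗᵢ[ℝ] ℂ :=
  Complex.orthonormalBasisOneI.repr.symm.trans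
    (rotation (⟨Complex.I, by simp [Submonoid.unitSphere]⟩ ^ (k : ℕ)))

lemma quarterTurn_apply (k : Dir) (p : Plane) :
    quarterTurn k p = Complex.I ^ (k : ℕ) * (p 0 + p 1 * Complex.I) := by
  rw [← Complex.orthonormalBasisOneI_repr_symm_apply p]
  exact congrArg (fun w : ℂ => w * Complex.orthonormalBasisOneI.repr.symm p)
    (SubmonoidClass.coe_pow _ _)

lemma re_quarterTurn_emb (k : Dir) (z : Lat) : (quarterTurn k (emb z)).re = (rot k z).1 := by
  rw [quarterTurn_apply]
  fin_cases k <;> simp [emb, rot, pow_succ]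

lemma im_quarterTurn_emb (k : Dir) (z : Lat) : (quarterTurn k (emb z)).im = (rot k z).2 := by
  rw [quarterTurn_apply]
  fin_cases k <;> simp [emb, rot, pow_succ]

lemma mem_segment_of_quarterTurn {k : Dir} {p a b : Plane}
    (h : quarterTurn k p ∈ segment ℝ (quarterTurn k a) (quarterTurn k b)) :
    p ∈ segment ℝ a b := by
  rw [mem_segment_iff_wbtw] at h ⊢
  exact ((quarterTurn k).toLinearEquiv.toAffineEquiv.wbtw_map_iff).1 h

lemma norm_ofLp_eq_max (p : Plane) : ‖p.ofLp‖ = max |p 0| |p 1| := by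
  refine le_antisymm ((pi_norm_le_iff_of_nonneg (by positivity)).2 ?_) ?_
  · simp [Fin.forall_fin_two]
  · exact max_le (norm_le_pi_norm p.ofLp 0) (norm_le_pi_norm p.ofLp 1)

lemma norm_ofLp_emb (z : Lat) : ‖(emb z).ofLp‖ = linf z := by
  rw [norm_ofLp_eq_max, linf]
  simp [emb]

lemma abs_re_quarterTurn_le (k : Dir) (p : Plane) : |(quarterTurn k p).re| ≤ ‖p.ofLp‖ := by
  have h0 := norm_le_pi_norm p.ofLp 0
  have h1 := norm_le_pi_norm p.ofLp 1
  rw [quarterTurn_apply]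
  fin_cases k <;> simpa [pow_succ]

lemma im_quarterTurn_le (k : Dir) (p : Plane) : (quarterTurn k p).im ≤ ‖p.ofLp‖ := by
  have h0 := abs_le.1 (norm_le_pi_norm p.ofLp 0)
  have h1 := abs_le.1 (norm_le_pi_norm p.ofLp 1)
  rw [quarterTurn_apply]
  fin_cases k <;> simp [pow_succ] <;> linarith

lemma exists_im_quarterTurn_eq (p : Plane) : ∃ k, (quarterTurn k p).im = ‖p.ofLp‖ := by
  rw [norm_ofLp_eq_max]
  rcases max_choice |p 0| |p 1| with h | h <;> rw [h]
  · rcases abs_choice (p 0) with h | h <;> rw [h]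
    · exact ⟨1, by simp [quarterTurn_apply]⟩
    · exact ⟨3, by simp [quarterTurn_apply, pow_succ]⟩
  · rcases abs_choice (p 1) with h | h <;> rw [h]
    · exact ⟨0, by simp [quarterTurn_apply]⟩
    · exact ⟨2, by simp [quarterTurn_apply]⟩

lemma exists_first_passage {f : ℝ → ℝ} {a b c : ℝ} (hab : a ≤ b)
    (hf : ContinuousOn f (Icc a b)) (ha : f a ≤ c) (hb : c ≤ f b) :
    ∃ τ ∈ Icc a b, f τ = c ∧ ∀ t ∈ Icc a τ, f t ≤ c := by
  have hcompact : IsCompact (Icc a b ∩ f ⁻¹' Ici c) :=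
    isCompact_Icc.of_isClosed_subset (hf.preimage_isClosed_of_isClosed isClosed_Icc isClosed_Ici)
      inter_subset_left
  obtain ⟨τ, ⟨hτ, hcτ⟩, hleast⟩ := hcompact.exists_isLeast ⟨b, right_mem_Icc.2 hab, hb⟩
  have hsub : Icc a τ ⊆ Icc a b := Icc_subset_Icc_right hτ.2
  have heq : f τ = c := by
    obtain ⟨t, ht, htc⟩ := intermediate_value_Icc hτ.1 (hf.mono hsub) ⟨ha, hcτ⟩
    rwa [← ht.2.antisymm (hleast ⟨hsub ht, htc.ge⟩)]
  refine ⟨τ, hτ, heq, fun t ht => ?_⟩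
  by_contra! hlt
  exact hlt.ne' (ht.2.antisymm (hleast ⟨hsub ht, hlt.le⟩) ▸ heq)

variable {r s : ℤ}

lemma CrossesTop.im_mem_Icc {k : Dir} {z : Lat} {v : List Dir}
    (h : CrossesTop r s (rot k z) (v.map (rotDir k))) (i : ℕ) :
    (quarterTurn k (emb (z + disp (v.take i)))).im ∈ Icc ((r : ℝ) + 1) s := by
  have hi := h.1 _ ((v.take_prefix i).map (rotDir k))
  rw [disp_map (vec_rotDir k), ← map_add] at hi
  rw [im_quarterTurn_emb]
  exact ⟨by exact_mod_cast hi.1, by exact_mod_cast hi.2⟩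

lemma ContainsCircuit.exists_mem {A : Set Plane} (h : ContainsCircuit r s A) (hs : 0 < s)
    (hrs : r < s) {γ : ℝ → Plane} (hγ : ContinuousOn γ (Icc 0 1)) (h0 : ‖(γ 0).ofLp‖ ≤ r + 1)
    (h1 : s ≤ ‖(γ 1).ofLp‖) : ∃ t ∈ Icc (0 : ℝ) 1, γ t ∈ A := by
  obtain ⟨τ, hτ, hτs, hle⟩ := exists_first_passage zero_le_one
    (f := fun t => ‖(γ t).ofLp‖) (by fun_prop) (h0.trans (by exact_mod_cast hrs)) h1
  obtain ⟨k, hk⟩ := exists_im_quarterTurn_eq (γ τ)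
  obtain ⟨z, v, hcross, hsubset⟩ := h k
  have hleft : (quarterTurn k (emb (z + disp (v.take 0)))).re ≤ -s := by
    rw [List.take_zero, disp_nil, add_zero, re_quarterTurn_emb]
    exact_mod_cast hcross.2.1
  have hright : s ≤ (quarterTurn k (emb (z + disp (v.take v.length)))).re := by
    have hend := hcross.2.2
    rw [disp_map (vec_rotDir k), ← map_add] at hend
    rw [List.take_length, re_quarterTurn_emb]
    exact_mod_cast hend
  have hs' : (0 : ℝ) < s := Int.cast_pos.2 hs
  have hbound := fun t ht => abs_le.1 ((abs_re_quarterTurn_le k (γ t)).trans (hle t ht))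
  have hsub : Icc 0 τ ⊆ Icc (0 : ℝ) 1 := Icc_subset_Icc_right hτ.2
  obtain ⟨t, ht, i, hi, hmem⟩ := exists_mem_segment_of_crosses
    (a := fun i => quarterTurn k (emb (z + disp (v.take i)))) (n := v.length)
    (γ := fun t => quarterTurn k (γ t)) (by intro hv; rw [hv] at hright; linarith) hτ.1
    ((quarterTurn k).continuous.comp_continuousOn (hγ.mono hsub))
    (fun t ht => hleft.trans (hbound t ht).1) (fun t ht => (hbound t ht).2.trans hright)
    (fun i _ => ((im_quarterTurn_le k _).trans h0).trans (hcross.im_mem_Icc i).1)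
    (fun i _ => (hcross.im_mem_Icc i).2.trans_eq (hτs.symm.trans hk.symm))
  refine ⟨t, hsub ht, hsubset (v.take i) v[i] ?_ ?_⟩
  · exact List.take_concat_get' v i hi ▸ List.take_prefix _ _
  · rw [List.take_concat_get' v i hi]
    exact mem_segment_of_quarterTurn hmem

lemma linf_eq_of_mem_bdry_box {R : ℤ} {z : Lat} (h : z ∈ bdry (box 0 R)) : linf z = R := by
  obtain ⟨hz, w, hw, hzw⟩ := h
  simp only [box, Set.mem_ofPred_eq, sub_zero, not_le] at hz hw
  have hw' := lt_linf.1 hw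
  have hzw' := linf_le.1 hzw.le
  refine hz.antisymm (le_linf.2 ?_)
  simp only [Prod.fst_sub, Prod.snd_sub] at hzw'
  omega

lemma ContainsCircuit.disconnects {A : Set Plane} (h : ContainsCircuit r s A) (hs : 0 < s)
    (hrs : r < s) : Disconnects A (embS (box 0 r)) (bdryE 0 s) := by
  rintro γ hγ ⟨z, hz, hγ0⟩ ⟨w, hw, hγ1⟩
  simp only [box, Set.mem_ofPred_eq, sub_zero] at hz
  refine h.exists_mem hs hrs hγ ?_ ?_
  · rw [← hγ0, norm_ofLp_emb]
    exact_mod_cast hz.trans (Int.le_add_one le_rfl)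
  · rw [← hγ1, norm_ofLp_emb, linf_eq_of_mem_bdry_box hw]

end Disconnection

/-! ### Loops and their frontiers -/

section Frontier

lemma isClosed_traceL (l : List Lat) : IsClosed (traceL l) := by
  refine IsClosed.union ?_ ?_
  · exact l.finite_toSet.isClosed_biUnion fun _ _ => isClosed_singleton
  · refine (l.zip l.tail).finite_toSet.isClosed_biUnion fun p _ => ?_
    rw [segment_eq_image_lineMap]
    exact (isCompact_Icc.image (by fun_prop)).isClosed

lemma rel_of_mem_zip_tail {α : Type*} {R : α → α → Prop} {l : List α} (h : l.IsChain R)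
    {p : α × α} (hp : p ∈ l.zip l.tail) : R p.1 p.2 := by
  obtain ⟨i, hi, rfl⟩ := List.getElem_of_mem hp
  simpa using List.isChain_iff_getElem.1 h i (by simp at hi; omega)

/-- The position of a lattice point on the segment is an integer, being the scalar product with
the unit vector `b - a`. -/
lemma eq_or_eq_of_emb_mem_segment {a b z : Lat} (h : Adj a b)
    (hz : emb z ∈ segment ℝ (emb a) (emb b)) : z = a ∨ z = b := by
  rw [segment_eq_image] at hz
  obtain ⟨θ, ⟨hθ0, hθ1⟩, hθ⟩ := hz
  have h1 : (1 - θ) * a.1 + θ * b.1 = z.1 := by simpa [emb] using congrArg (fun p : Plane => p 0) hθ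
  have h2 : (1 - θ) * a.2 + θ * b.2 = z.2 := by simpa [emb] using congrArg (fun p : Plane => p 1) hθ
  have hunit : ((a.1 : ℝ) - b.1) ^ 2 + ((a.2 : ℝ) - b.2) ^ 2 = 1 := by exact_mod_cast h
  obtain ⟨m, rfl⟩ : ∃ m : ℤ, θ = m := by
    refine ⟨(b.1 - a.1) * (z.1 - a.1) + (b.2 - a.2) * (z.2 - a.2), ?_⟩
    push_cast
    rw [← h1, ← h2]
    linear_combination (-θ) * hunit
  norm_cast at hθ0 hθ1 h1 h2
  obtain rfl | rfl : m = 0 ∨ m = 1 := by omega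
  · exact Or.inl (Prod.ext (by linarith) (by linarith))
  · exact Or.inr (Prod.ext (by linarith) (by linarith))

lemma emb_injective : Function.Injective emb := fun a b h => by
  simpa [emb, Prod.ext_iff] using h

lemma mem_verts_of_emb_mem_trace {γ : ULoop} {z : Lat} (h : emb z ∈ γ.trace) : z ∈ γ.verts := by
  have hword : ∀ x ∈ γ.out.word ++ γ.out.word.take 1, x ∈ γ.out.word := fun x hx =>
    (List.mem_append.1 hx).elim id List.mem_of_mem_take
  rcases h with h | h
  · obtain ⟨x, hx, hzx⟩ := mem_iUnion₂.1 h
    exact emb_injective hzx ▸ hword x hx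
  · obtain ⟨p, hp, hzp⟩ := mem_iUnion₂.1 h
    have hmem := List.of_mem_zip hp
    rcases eq_or_eq_of_emb_mem_segment (rel_of_mem_zip_tail γ.out.adj hp) hzp with rfl | rfl
    · exact hword _ hmem.1
    · exact hword _ (List.mem_of_mem_tail hmem.2)

variable {A : Set Plane}

lemma exists_unbounded_of_notMem_Fill (hA : IsClosed A) {p : Plane} (hp : p ∉ Fill A) :
    ∃ C ⊆ Aᶜ, IsConnected C ∧ p ∈ C ∧ ¬Bornology.IsBounded C := by
  simpa [Fill, hA.closure_eq] using hp

lemma frontier_Fill_subset (hA : IsClosed A) : frontier (Fill A) ⊆ A := by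
  intro x hx
  by_contra hxA
  obtain ⟨ε, hε, hball⟩ := Metric.isOpen_iff.1 hA.isOpen_compl x hxA
  rw [frontier_eq_closure_inter_closure] at hx
  obtain ⟨q, hqball, hq⟩ := mem_closure_iff_nhds.1 hx.1 _ (Metric.ball_mem_nhds x hε)
  obtain ⟨p, hpball, hp⟩ := mem_closure_iff_nhds.1 hx.2 _ (Metric.ball_mem_nhds x hε)
  obtain ⟨C, hCA, hC, hpC, hunbounded⟩ := exists_unbounded_of_notMem_Fill hA hp
  have hconn : IsConnected (C ∪ Metric.ball x ε) :=
    hC.union ⟨p, hpC, hpball⟩ ((convex_ball x ε).isConnected ⟨x, Metric.mem_ball_self hε⟩)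
  have hsub : C ∪ Metric.ball x ε ⊆ (closure A)ᶜ := by
    rw [hA.closure_eq]
    exact union_subset hCA hball
  exact hunbounded ((hq _ hsub hconn (Or.inr hqball)).subset subset_union_left)

lemma exists_le_norm_ofLp_of_unbounded {C : Set Plane} (hC : ¬Bornology.IsBounded C) (c : ℝ) :
    ∃ q ∈ C, c ≤ ‖q.ofLp‖ := by
  by_contra! h
  refine hC (((PiLp.antilipschitzWith_ofLp 2 _).isBounded_preimage
    (Metric.isBounded_ball (x := 0) (r := c))).subset fun q hq => ?_)
  simpa using h q hq

lemma joinedIn_of_isConnected_subset {X : Type*} [TopologicalSpace X]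
    [LocallyPathConnectedSpace X] {C U : Set X} (hU : IsOpen U) (hC : IsConnected C)
    (hCU : C ⊆ U) {p q : X} (hp : p ∈ C) (hq : q ∈ C) : JoinedIn U p q := by
  have hcomp := isConnected_connectedComponentIn_iff.2 (hCU hp)
  refine (((hU.connectedComponentIn.isConnected_iff_isPathConnected).1 hcomp).joinedIn p
    (mem_connectedComponentIn (hCU hp)) q ?_).mono (connectedComponentIn_subset U p)
  exact hC.isPreconnected.subset_connectedComponentIn hp hCU hq

variable {r s : ℤ}

lemma ContainsCircuit.emb_notMem_frontier_Fill (h : ContainsCircuit r s A) (hA : IsClosed A)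
    (hs : 0 < s) (hrs : r < s) {z : Lat} (hz : linf z = r) : emb z ∉ frontier (Fill A) := by
  intro hfrontier
  rw [frontier_eq_closure_inter_closure] at hfrontier
  have hopen : IsOpen {p : Plane | ‖p.ofLp‖ < r + 1} := isOpen_lt (by fun_prop) (by fun_prop)
  have hz' : emb z ∈ {p : Plane | ‖p.ofLp‖ < r + 1} := by
    simp [norm_ofLp_emb, hz]
  obtain ⟨p, hpr, hp⟩ := mem_closure_iff_nhds.1 hfrontier.2 _ (hopen.mem_nhds hz')
  obtain ⟨C, hCA, hC, hpC, hunbounded⟩ := exists_unbounded_of_notMem_Fill hA hp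
  obtain ⟨q, hqC, hqs⟩ := exists_le_norm_ofLp_of_unbounded hunbounded s
  have hjoined := joinedIn_of_isConnected_subset hA.isOpen_compl hC hCA hpC hqC
  obtain ⟨t, ht, htA⟩ := h.exists_mem hs hrs hjoined.somePath.continuous_extend.continuousOn
    (by simpa using hpr.le) (by simpa using hqs)
  rw [Path.extend_apply _ ht] at htA
  exact hjoined.somePath_mem ⟨t, ht⟩ htA

lemma mem_circuitFreeCrossings {γ : ULoop} {S : Set Plane} (hS : S ⊆ γ.trace)
    (hcross : CrossesAnn S 0 r s) (hfree : ¬ContainsCircuit r s γ.trace) :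
    γ ∈ circuitFreeCrossings r s := by
  obtain ⟨⟨_, hz, z, hzr, rfl⟩, ⟨_, hw, w, hws, rfl⟩⟩ := hcross
  exact ⟨⟨z, mem_verts_of_emb_mem_trace (hS hz), linf_eq_of_mem_bdry_box hzr⟩,
    ⟨w, mem_verts_of_emb_mem_trace (hS hw), linf_eq_of_mem_bdry_box hws⟩, hfree⟩

lemma mem_circuitFreeCrossings_of_not_disconnects (hs : 0 < s) (hrs : r < s) {γ : ULoop}
    (hcross : CrossesAnn γ.trace 0 r s)
    (hdisc : ¬Disconnects γ.trace (embS (box 0 r)) (bdryE 0 s)) :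
    γ ∈ circuitFreeCrossings r s :=
  mem_circuitFreeCrossings subset_rfl hcross fun hcircuit =>
    hdisc (hcircuit.disconnects hs hrs)

lemma mem_circuitFreeCrossings_of_crossesAnn_loopFrontier (hs : 0 < s) (hrs : r < s) {γ : ULoop}
    (hcross : CrossesAnn (loopFrontier γ) 0 r s) : γ ∈ circuitFreeCrossings r s := by
  have hclosed : IsClosed γ.trace := isClosed_traceL _
  refine mem_circuitFreeCrossings (frontier_Fill_subset hclosed) hcross fun hcircuit => ?_
  obtain ⟨_, hz, z, hzr, rfl⟩ := hcross.1
  exact hcircuit.emb_notMem_frontier_Fill hclosed hs hrs (linf_eq_of_mem_bdry_box hzr) hz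

end Frontier

/-! ### Void probabilities of the loop soup -/

section LoopSoup

instance : Countable RootedLoop := by
  have hinj : Function.Injective RootedLoop.word := by
    rintro ⟨u, _, _⟩ ⟨v, _, _⟩ rfl
    rfl
  exact hinj.countable

instance : Countable ULoop := inferInstanceAs (Countable (Quot loopRot))

lemma poissonProb_zero (x : ℝ≥0) : poissonProb x 0 = ENNReal.ofReal (Real.exp (-x)) := by
  simp [poissonProb]

lemma nuD_le_loopWeight (D : Set Lat) (γ : ULoop) : nuD D γ ≤ loopWeight γ := by
  unfold nuD
  split_ifs <;> simp

variable {B : Set ULoop} {M : ℝ}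

lemma sum_loopWeight_le (hM : 0 ≤ M) (hB : nuMass B ≤ ENNReal.ofReal M) {s : Finset ULoop}
    (hs : ↑s ⊆ B) : ∑ γ ∈ s, (loopWeight γ : ℝ) ≤ M := by
  have hsum : ((∑ γ ∈ s, loopWeight γ : ℝ≥0) : ℝ≥0∞) ≤ ENNReal.ofReal M :=
    calc ((∑ γ ∈ s, loopWeight γ : ℝ≥0) : ℝ≥0∞)
        = ∑ γ ∈ s, B.indicator (fun γ => (loopWeight γ : ℝ≥0∞)) γ := by
          push_cast
          exact Finset.sum_congr rfl fun γ hγ => by rw [indicator_of_mem (hs hγ)]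
      _ ≤ ∑' γ, B.indicator (fun γ => (loopWeight γ : ℝ≥0∞)) γ := ENNReal.sum_le_tsum s
      _ = nuMass B := (tsum_subtype B _).symm
      _ ≤ ENNReal.ofReal M := hB
  exact_mod_cast (Real.le_toNNReal_iff_coe_le hM).1 (ENNReal.coe_le_coe.1 hsum)

variable {D : Set Lat} {α : ℝ} {P : Measure Config}

lemma IsLoopSoup.exp_neg_mul_le_measure_forall_finset_eq_zero (hP : IsLoopSoup D α P)
    (hα : 0 ≤ α) (hM : 0 ≤ M) (hB : nuMass B ≤ ENNReal.ofReal M) {s : Finset ULoop}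
    (hs : ↑s ⊆ B) :
    ENNReal.ofReal (Real.exp (-(α * M))) ≤ P {ω | ∀ γ ∈ s, ω γ = 0} := by
  have hsum : ∑ γ ∈ s, α * nuD D γ ≤ α * M := by
    rw [← Finset.mul_sum]
    exact mul_le_mul_of_nonneg_left ((Finset.sum_le_sum fun γ _ => mod_cast nuD_le_loopWeight D γ)
      |>.trans (sum_loopWeight_le hM hB hs)) hα
  calc ENNReal.ofReal (Real.exp (-(α * M)))
      ≤ ENNReal.ofReal (Real.exp (∑ γ ∈ s, -(α * nuD D γ))) := by
        rw [Finset.sum_neg_distrib]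
        gcongr
    _ = ∏ γ ∈ s, poissonProb (α.toNNReal * nuD D γ) 0 := by
        rw [Real.exp_sum, ENNReal.ofReal_prod_of_nonneg fun _ _ => (Real.exp_pos _).le]
        simp [poissonProb_zero, hα]
    _ = P {ω | ∀ γ ∈ s, ω γ = 0} := (hP.2 s fun _ => 0).symm

lemma measurableSet_forall_eq_zero (s : Finset ULoop) :
    MeasurableSet {ω : Config | ∀ γ ∈ s, ω γ = 0} := by
  simp only [ofPred_forall]
  exact s.measurableSet_biInter fun γ _ => measurable_pi_apply γ (measurableSet_singleton 0)

lemma IsLoopSoup.exp_neg_mul_le_measure_forall_eq_zero (hP : IsLoopSoup D α P) (hα : 0 ≤ α)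
    (hM : 0 ≤ M) (hB : nuMass B ≤ ENNReal.ofReal M) :
    ENNReal.ofReal (Real.exp (-(α * M))) ≤ P {ω | ∀ γ ∈ B, ω γ = 0} := by
  have := hP.1
  rcases B.eq_empty_or_nonempty with rfl | hne
  · simpa using hP.exp_neg_mul_le_measure_forall_finset_eq_zero (s := ∅) hα hM hB (by simp)
  obtain ⟨f, rfl⟩ := B.to_countable.exists_eq_range hne
  let void (n : ℕ) : Set Config := {ω | ∀ γ ∈ (Finset.range n).image f, ω γ = 0}
  have hvoid : {ω : Config | ∀ γ ∈ range f, ω γ = 0} = ⋂ n, void n := by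
    ext ω
    simp only [void, mem_ofPred_eq, mem_iInter, Finset.forall_mem_image, forall_mem_range,
      Finset.mem_range]
    exact ⟨fun h _ i _ => h i, fun h i => h (i + 1) i.lt_succ_self⟩
  have hanti : Antitone void := fun m n hmn ω hω γ hγ =>
    hω γ (Finset.image_subset_image (Finset.range_mono hmn) hγ)
  rw [hvoid, hanti.measure_iInter
    (fun n => (measurableSet_forall_eq_zero _).nullMeasurableSet) ⟨0, measure_ne_top _ _⟩]
  refine le_iInf fun n => hP.exp_neg_mul_le_measure_forall_finset_eq_zero hα hM hB ?_
  simp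

end LoopSoup

lemma BandScale.of_floor {δ : ℝ} (hδ : 0 < δ) {r : ℤ} (hr : 1 ≤ r)
    (hrs : r < ⌊(1 + δ) * (r : ℝ)⌋) :
    BandScale r ⌊(1 + δ) * (r : ℝ)⌋ ((⌊(1 + δ) * (r : ℝ)⌋ - r - 1) / 4 + 1)
      ⌈8 * (1 + δ) / δ⌉₊ := by
  set s := ⌊(1 + δ) * (r : ℝ)⌋
  set N := ⌈8 * (1 + δ) / δ⌉₊
  have hs_le : (s : ℝ) ≤ (1 + δ) * r := Int.floor_le _
  have hs_lt : (1 + δ) * (r : ℝ) < s + 1 := Int.lt_floor_add_one _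
  have hrs' : (r : ℝ) + 1 ≤ s := by exact_mod_cast hrs
  have hN : 8 * (1 + δ) ≤ N * δ := (div_le_iff₀ hδ).1 (Nat.le_ceil _)
  have hgap : δ * r ≤ 2 * (s - r) := by linarith
  have hsN : 4 * s ≤ N * (s - r) := by
    suffices 8 * (s : ℝ) ≤ 2 * (N * (s - r)) by
      have : 4 * (s : ℝ) ≤ N * (s - r) := by linarith
      exact_mod_cast this
    calc 8 * (s : ℝ) ≤ 8 * (1 + δ) * r := by linarith
      _ ≤ N * δ * r := by gcongr
      _ = N * (δ * r) := by ring
      _ ≤ N * (2 * (s - r)) := by gcongr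
      _ = 2 * (N * (s - r)) := by ring
  have hwidth : s - r ≤ 4 * ((s - r - 1) / 4 + 1) := by omega
  exact ⟨hr, by omega, by omega, by nlinarith [mul_le_mul_of_nonneg_left hwidth N.cast_nonneg]⟩

theorem no_crossing_loop_close_radii_general {δ : ℝ} (hδ : 0 < δ) :
    ∃ M : ℝ, 0 ≤ M ∧ ∀ (D : Set Lat) (α : ℝ) (r : ℤ) (P : Measure Config),
      0 ≤ α → 1 ≤ r → r < ⌊(1 + δ) * (r : ℝ)⌋ → IsLoopSoup D α P →
      ENNReal.ofReal (Real.exp (-(α * M))) ≤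
        P {ω | ∀ γ ∈ Config.loops ω,
            ¬ CrossesAnn (loopFrontier γ) 0 r ⌊(1 + δ) * (r : ℝ)⌋} ∧
      ENNReal.ofReal (Real.exp (-(α * M))) ≤
        P {ω | ∀ γ ∈ Config.loops ω,
            ¬ (CrossesAnn (ULoop.trace γ) 0 r ⌊(1 + δ) * (r : ℝ)⌋ ∧
              ¬ Disconnects (ULoop.trace γ) (embS (box 0 r))
                  (bdryE 0 ⌊(1 + δ) * (r : ℝ)⌋))} := by
  refine ⟨16 * ⌈8 * (1 + δ) / δ⌉₊ * 8 ^ (80 * ⌈8 * (1 + δ) / δ⌉₊), by positivity,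
    fun D α r P hα hr hrs hP => ?_⟩
  have hs : 0 < ⌊(1 + δ) * (r : ℝ)⌋ := by omega
  have hvoid := hP.exp_neg_mul_le_measure_forall_eq_zero hα (by positivity)
    (BandScale.of_floor hδ hr hrs).nuMass_circuitFreeCrossings_le
  refine ⟨hvoid.trans (measure_mono fun ω hω γ hγ hcross => hγ (hω γ ?_)),
    hvoid.trans (measure_mono fun ω hω γ hγ hcross => hγ (hω γ ?_))⟩
  · exact mem_circuitFreeCrossings_of_crossesAnn_loopFrontier hs hrs hcross
  · exact mem_circuitFreeCrossings_of_not_disconnects hs hrs hcross.1 hcross.2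

/-- For every `δ > 0` there is `C(δ) > 0` such that for every intensity
`α ∈ (0,1/2]` and all `1 ≤ r < R` with `⌊(1+δ)r⌋ > r`: (i) with probability at least
`C(δ)` no loop frontier of `𝓛^b_R` crosses `A_{r,⌊(1+δ)r⌋}`, and (ii) with probability
at least `C(δ)` no loop of `𝓛_R` crosses `A_{r,⌊(1+δ)r⌋}` without disconnecting `B_r`
from `∂B_{⌊(1+δ)r⌋}`. -/
theorem no_crossing_loop_close_radii :
    ∀ δ : ℝ, 0 < δ →
    ∃ C : ℝ, 0 < C ∧
      ∀ (α : ℝ) (r R : ℤ) (P : Measure Config),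
        0 < α → α ≤ 1 / 2 → 1 ≤ r → r < R → r < ⌊(1 + δ) * (r : ℝ)⌋ →
        IsLoopSoup (box 0 R) α P →
        ENNReal.ofReal C ≤
          P {ω | ∀ γ ∈ Config.loops ω,
              ¬ CrossesAnn (loopFrontier γ) 0 r ⌊(1 + δ) * (r : ℝ)⌋} ∧
        ENNReal.ofReal C ≤
          P {ω | ∀ γ ∈ Config.loops ω,
              ¬ (CrossesAnn (ULoop.trace γ) 0 r ⌊(1 + δ) * (r : ℝ)⌋ ∧
                ¬ Disconnects (ULoop.trace γ) (embS (box 0 r))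
                    (bdryE 0 ⌊(1 + δ) * (r : ℝ)⌋))} := by
  intro δ hδ
  obtain ⟨M, hM, hvoid⟩ := no_crossing_loop_close_radii_general hδ
  refine ⟨Real.exp (-(1 / 2 * M)), Real.exp_pos _, fun α r R P hα hα' hr _ hrs hP => ?_⟩
  have hexp : Real.exp (-(1 / 2 * M)) ≤ Real.exp (-(α * M)) := by gcongr
  exact (hvoid _ α r P hα.le hr hrs hP).imp
    (ENNReal.ofReal_le_ofReal hexp).trans (ENNReal.ofReal_le_ofReal hexp).trans

end RWLSPaper
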